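/- There exist a constant c > 0 and an integer d₀ such that for all d ≥ d₀, every d-regular graph G has a spanning subgraph H with girth at least 6 (i.e., H contains no triangle, no 4-cycle and no 5-cycle) and minimum degree δ(H) ≥ c·√d. -/

import Mathlib

open SimpleGraph

def ContainsCopy {α β : Type*} (F : SimpleGraph α) (H : SimpleGraph β) : Prop :=
  ∃ f : F →g H, Function.Injective f

abbrev GraphFamily := Set (Σ n : ℕ, SimpleGraph (Fin n))

def FamFree {β : Type*} (H : SimpleGraph β) (𝓕 : GraphFamily) : Prop :=
  ∀ F ∈ 𝓕, ¬ ContainsCopy F.2 H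

noncomputable def extremalNum (n : ℕ) (𝓕 : GraphFamily) : ℕ :=
  sSup {k | ∃ H : SimpleGraph (Fin n), FamFree H 𝓕 ∧ k = H.edgeSet.ncard}

def LocallyInjective {α β : Type*} {F : SimpleGraph α} {G : SimpleGraph β}
    (φ : F →g G) : Prop :=
  ∀ v : α, Set.InjOn φ (F.neighborSet v)

def NoLocInjHom {α β : Type*} (F : SimpleGraph α) (G : SimpleGraph β) : Prop :=
  ¬ ∃ φ : F →g G, LocallyInjective φ

def ClosedFamily (𝓕 : GraphFamily) : Prop :=
  ∀ (W : Type) [Fintype W] (G : SimpleGraph W),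
    (∀ F ∈ 𝓕, NoLocInjHom F.2 G) ↔ FamFree G 𝓕

noncomputable def deg {β : Type*} (H : SimpleGraph β) (v : β) : ℕ :=
  (H.neighborSet v).ncard

noncomputable def minDeg {β : Type*} [Fintype β] (H : SimpleGraph β) : ℕ :=
  ⨅ v, deg H v

noncomputable def maxDeg {β : Type*} [Fintype β] (H : SimpleGraph β) : ℕ :=
  ⨆ v, deg H v

def RegularDeg {β : Type*} (G : SimpleGraph β) (d : ℕ) : Prop :=
  ∀ v, deg G v = d

noncomputable def Bad {α γ : Type*} (G : SimpleGraph α) (χ : α → γ) (v : α) : ℕ :=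
  {u | u ∈ G.neighborSet v ∧ ∃ v', v' ∈ G.neighborSet u ∧ v' ≠ v ∧ χ v' = χ v}.ncard


def XIsIT {α ι : Type*} (E : SimpleGraph α) (W : Finset α) (c : α → ι) (I : Finset ι)
    (t : ι → α) : Prop :=
  ∀ i ∈ I, t i ∈ W ∧ c (t i) = i ∧ ∀ j ∈ I, ¬ E.Adj (t i) (t j)

open Classical in
theorem xhaxell_aux {α ι : Type*} [Finite α] (n : ℕ) : ∀ (I : Finset ι) (W : Finset α)
    (c : α → ι) (E : SimpleGraph α) (Y : ι), Y ∈ I → I.card = n →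
    (∃ t, XIsIT E W c (I.erase Y) t) → (¬ ∃ t, XIsIT E W c I t) →
    ∃ S ⊆ I, Y ∈ S ∧ ∃ Z ⊆ W, Z.card ≤ 2 * (S.card - 1) ∧
      ∀ a ∈ W, c a ∈ S → ∃ z ∈ Z, E.Adj z a := by
  induction n with
  | zero =>
    intro I W c E Y hY hI
    rw [Finset.card_eq_zero] at hI
    subst hI
    simp at hY
  | succ n ih =>
    intro I W c E Y hY hI hex hno
    obtain ⟨E', hE', hmin⟩ := exists_minimal_le_of_wellFoundedLT
      (fun F : SimpleGraph α => ¬ ∃ t, XIsIT F W c I t) E hno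
    obtain ⟨t0, ht0⟩ := hex
    have ht0' : XIsIT E' W c (I.erase Y) t0 := fun i hi =>
      ⟨(ht0 i hi).1, (ht0 i hi).2.1, fun j hj h => (ht0 i hi).2.2 j hj (hE' h)⟩
    by_cases hx : ∃ x ∈ W, c x = Y
    swap
    · refine ⟨{Y}, by simpa using hY, by simp, ∅, by simp, by simp, ?_⟩
      intro a ha hc
      exact absurd ⟨a, ha, by simpa using hc⟩ hx
    obtain ⟨x, hxW, hxY⟩ := hx
    have hnoE' := hmin.1
    have : ∃ j ∈ I.erase Y, E'.Adj x (t0 j) := by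
      by_contra hcon
      push Not at hcon
      apply hnoE'
      refine ⟨Function.update t0 Y x, ?_⟩
      intro i hi
      by_cases hiY : i = Y
      · subst hiY
        refine ⟨by simpa using hxW, by simpa using hxY, ?_⟩
        intro j hj
        by_cases hji : j = i
        · subst hji; simp
        · simp only [Function.update_self, Function.update_of_ne hji]
          exact hcon j (Finset.mem_erase.2 ⟨hji, hj⟩)
      · have h1 := ht0' i (Finset.mem_erase.2 ⟨hiY, hi⟩)
        simp only [Function.update_of_ne hiY]
        refine ⟨h1.1, h1.2.1, ?_⟩
        intro j hj
        by_cases hjY : j = Y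
        · subst hjY
          simp only [Function.update_self]
          intro h
          exact hcon i (Finset.mem_erase.2 ⟨hiY, hi⟩) h.symm
        · simp only [Function.update_of_ne hjY]
          exact h1.2.2 j (Finset.mem_erase.2 ⟨hjY, hj⟩)
    obtain ⟨j, hj, hadj⟩ := this
    obtain ⟨hjY, hjI⟩ := Finset.mem_erase.1 hj
    obtain ⟨y, hy⟩ : ∃ y, y = t0 j := ⟨_, rfl⟩
    rw [← hy] at hadj
    have hyW : y ∈ W := hy ▸ (ht0' j hj).1
    have hyc : c y = j := hy ▸ (ht0' j hj).2.1
    -- delete edge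
    have hlt : ∃ t, XIsIT (E'.deleteEdges {s(x, y)}) W c I t := by
      by_contra hcon
      have hle := hmin.2 hcon (deleteEdges_le _)
      have := hle hadj
      simp [deleteEdges_adj] at this
    obtain ⟨t1, ht1⟩ := hlt
    have hxy : t1 Y = x ∧ t1 j = y := by
      by_contra hcon
      apply hnoE'
      refine ⟨t1, fun i hi => ⟨(ht1 i hi).1, (ht1 i hi).2.1, ?_⟩⟩
      intro k hk hik
      have h2 := (ht1 i hi).2.2 k hk
      rw [deleteEdges_adj] at h2
      have h3 : s(t1 i, t1 k) = s(x, y) := by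
        by_contra h; exact h2 ⟨hik, by simpa using h⟩
      have ci := (ht1 i hi).2.1
      have ck := (ht1 k hk).2.1
      rw [Sym2.eq_iff] at h3
      rcases h3 with ⟨h3, h4⟩ | ⟨h3, h4⟩
      · rw [h3, hxY] at ci; rw [h4, hyc] at ck
        subst ci; subst ck; exact hcon ⟨h3, h4⟩
      · rw [h3, hyc] at ci; rw [h4, hxY] at ck
        subst ci; subst ck; exact hcon ⟨h4, h3⟩
    obtain ⟨hx1, hy1⟩ := hxy
    have hne : ∀ i ∈ I, ∀ k ∈ I, i ≠ Y → i ≠ j → ¬ E'.Adj (t1 k) (t1 i) := by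
      intro i hi k hk hiY hij h
      have h2 := (ht1 k hk).2.2 i hi
      rw [deleteEdges_adj] at h2
      apply h2
      refine ⟨h, ?_⟩
      simp only [Set.mem_singleton_iff, Sym2.eq_iff]
      have ci := (ht1 i hi).2.1
      rintro (⟨_, h4⟩ | ⟨_, h4⟩)
      · rw [h4, hyc] at ci; exact hij ci.symm
      · rw [h4, hxY] at ci; exact hiY ci.symm
    set W' := W.filter (fun a => ¬ E'.Adj x a ∧ ¬ E'.Adj y a) with hW'
    set c' : α → ι := fun a => if c a = j then Y else c a with hc'
    have hYI' : Y ∈ I.erase j := Finset.mem_erase.2 ⟨hjY.symm, hY⟩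
    obtain ⟨S, hS, hYS, Z, hZ, hZc, hdom⟩ := ih (I.erase j) W' c' E' Y hYI'
      (by rw [Finset.card_erase_of_mem hjI]; omega)
      (by
        refine ⟨t1, ?_⟩
        intro i hi
        simp only [Finset.mem_erase] at hi
        obtain ⟨hiY, hij, hi⟩ := hi
        refine ⟨?_, ?_, ?_⟩
        · rw [hW', Finset.mem_filter]
          refine ⟨(ht1 i hi).1, ?_, ?_⟩
          · rw [← hx1]; exact hne i hi Y hY hiY hij
          · rw [← hy1]; exact hne i hi j hjI hiY hij
        · simp only [hc', (ht1 i hi).2.1, hij, if_false]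
        · intro k hk h
          simp only [Finset.mem_erase] at hk
          exact hne i hi k hk.2.2 hiY hij h.symm)
      (by
        rintro ⟨t, ht⟩
        apply hnoE'
        have hYt := ht Y hYI'
        have hYW := Finset.mem_filter.1 hYt.1
        have hot : ∀ i ∈ I, i ≠ j → i ≠ Y → t i ∈ W ∧ c (t i) = i ∧ ¬ E'.Adj x (t i) ∧
            ¬ E'.Adj y (t i) ∧ (∀ k ∈ I, k ≠ j → ¬ E'.Adj (t i) (t k)) := by
          intro i hi hij hiY
          have h1 := ht i (Finset.mem_erase.2 ⟨hij, hi⟩)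
          have h2 := Finset.mem_filter.1 h1.1
          refine ⟨h2.1, ?_, h2.2.1, h2.2.2, fun k hk hkj => h1.2.2 k (Finset.mem_erase.2 ⟨hkj, hk⟩)⟩
          have h3 := h1.2.1
          simp only [hc'] at h3
          split_ifs at h3 with h4
          · exact absurd h3.symm hiY
          · exact h3
        by_cases hcase : c (t Y) = j
        · refine ⟨fun i => if i = j then t Y else if i = Y then x else t i, ?_⟩
          intro i hi
          by_cases hij : i = j
          · subst hij
            simp only [if_true]
            refine ⟨hYW.1, hcase, ?_⟩
            intro k hk
            by_cases hki : k = i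
            · simp [hki]
            · by_cases hkY : k = Y
              · simp only [hki, hkY, if_true, if_false, hjY.symm]
                exact fun h => hYW.2.1 h.symm
              · simp only [hki, hkY, if_false]
                intro h; exact (hot k hk hki hkY).2.2.2.2 Y hY hjY.symm h.symm
          · by_cases hiY : i = Y
            · simp only [hij, if_false, hiY, if_true, hjY.symm]
              refine ⟨hxW, hxY, ?_⟩
              intro k hk
              by_cases hki : k = j
              · simp only [hki, if_true]; exact hYW.2.1
              · by_cases hkY : k = Y
                · simp [hjY.symm, hkY]
                · simp only [hki, hkY, if_false]; exact (hot k hk hki hkY).2.2.1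
            · have h := hot i hi hij hiY
              simp only [hij, hiY, if_false]
              refine ⟨h.1, h.2.1, ?_⟩
              intro k hk
              by_cases hki : k = j
              · simp only [hki, if_true]; exact h.2.2.2.2 Y hY hjY.symm
              · by_cases hkY : k = Y
                · simp only [hki, hkY, hjY.symm, if_true, if_false]; exact fun h' => h.2.2.1 h'.symm
                · simp only [hki, hkY, if_false]; exact h.2.2.2.2 k hk hki
        · have hcY : c (t Y) = Y := by
            have h3 := hYt.2.1
            simp only [hc', hcase, if_false] at h3
            exact h3
          refine ⟨fun i => if i = j then y else t i, ?_⟩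
          have hnY : ∀ k ∈ I, k ≠ j → ¬ E'.Adj y (t k) := by
            intro k hk hki
            by_cases hkY : k = Y
            · subst hkY; exact hYW.2.2
            · exact (hot k hk hki hkY).2.2.2.1
          intro i hi
          by_cases hij : i = j
          · simp only [hij, if_true]
            refine ⟨hyW, hyc, ?_⟩
            intro k hk
            by_cases hki : k = j
            · simp [hki]
            · simp only [hki, if_false]; exact hnY k hk hki
          · simp only [hij, if_false]
            have h1 := ht i (Finset.mem_erase.2 ⟨hij, hi⟩)
            refine ⟨(Finset.mem_filter.1 h1.1).1, ?_, ?_⟩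
            · by_cases hiY : i = Y
              · rw [hiY]; exact hcY
              · exact (hot i hi hij hiY).2.1
            · intro k hk
              by_cases hki : k = j
              · simp only [hki, if_true]; exact fun h => hnY i hi hij h.symm
              · simp only [hki, if_false]; exact h1.2.2 k (Finset.mem_erase.2 ⟨hki, hk⟩))
    have hjS : j ∉ S := fun h => (Finset.mem_erase.1 (hS h)).1 rfl
    refine ⟨insert j S, ?_, Finset.mem_insert_of_mem hYS, insert x (insert y Z), ?_, ?_, ?_⟩
    · intro i hi
      rcases Finset.mem_insert.1 hi with rfl | hi
      · exact hjI
      · exact Finset.mem_of_mem_erase (hS hi)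
    · intro a ha
      rcases Finset.mem_insert.1 ha with rfl | ha
      · exact hxW
      · rcases Finset.mem_insert.1 ha with rfl | ha
        · exact hyW
        · exact (Finset.mem_filter.1 (hZ ha)).1
    · rw [Finset.card_insert_of_notMem hjS]
      have h1 := Finset.card_insert_le x (insert y Z)
      have h2 := Finset.card_insert_le y Z
      have h3 : 0 < S.card := Finset.card_pos.2 ⟨Y, hYS⟩
      omega
    · intro a ha hca
      by_cases h1 : E'.Adj x a
      · exact ⟨x, by simp, hE' h1⟩
      by_cases h2 : E'.Adj y a
      · exact ⟨y, by simp, hE' h2⟩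
      obtain ⟨z, hz, hza⟩ := hdom a (Finset.mem_filter.2 ⟨ha, h1, h2⟩) (by
        simp only [hc']
        split_ifs with h
        · exact hYS
        · rcases Finset.mem_insert.1 hca with h' | h'
          · exact absurd h' h
          · exact h')
      exact ⟨z, by simp [hz], hE' hza⟩

open Classical in
theorem xhaxell {α ι : Type*} [Finite α] [Nonempty α] (I : Finset ι) (W : Finset α)
    (c : α → ι) (E : SimpleGraph α) 
    (h : ∀ S ⊆ I, S.Nonempty → ∀ Z ⊆ W, Z.card ≤ 2 * (S.card - 1) →
      ∃ a ∈ W, c a ∈ S ∧ ∀ z ∈ Z, ¬ E.Adj z a) : ∃ t, XIsIT E W c I t := by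
  induction I using Finset.strongInduction with
  | H I ih =>
    by_contra hcon
    rcases I.eq_empty_or_nonempty with rfl | ⟨Y, hY⟩
    · exact hcon ⟨fun _ => Classical.arbitrary α, fun i hi => by simp at hi⟩
    obtain ⟨S, hS, hYS, Z, hZ, hZc, hd⟩ := xhaxell_aux I.card I W c E Y hY rfl
      (ih _ (Finset.erase_ssubset hY) (fun S hS => h S (hS.trans (Finset.erase_subset _ _)))) hcon
    obtain ⟨a, ha, hca, hz⟩ := h S hS ⟨Y, hYS⟩ Z hZ hZc
    obtain ⟨z, hzZ, hza⟩ := hd a ha hca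
    exact hz z hzZ hza
set_option linter.unusedSectionVars false
set_option linter.unusedSimpArgs false

theorem xavg {V K : Type*} [Fintype V] [DecidableEq V] [Fintype K] (F : (V → K) → ℝ) (a : V) :
    ∑ f : V → K, ∑ k, F (Function.update f a k) = (Fintype.card K : ℝ) * ∑ f, F f := by
  rw [← Finset.sum_product']
  have : (Fintype.card K : ℝ) * ∑ f, F f = ∑ x : (V → K) × K, F x.1 := by
    rw [← Finset.univ_product_univ, Finset.sum_product]
    simp [Finset.mul_sum]
  rw [this, Finset.univ_product_univ]
  refine Finset.sum_nbij' (fun x => (Function.update x.1 a x.2, x.1 a))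
    (fun x => (Function.update x.1 a x.2, x.1 a)) ?_ ?_ ?_ ?_ ?_ <;> simp

theorem xseq {V K : Type*} [Fintype V] [DecidableEq V] [Fintype K] [Nonempty K] (ρ : V → ℕ)
    (hρ : Function.Injective ρ) (S : Finset V) (g : V → (V → K) → ℝ) (M : V → ℝ)
    (h0 : ∀ v f, 0 ≤ g v f)
    (hinv : ∀ v ∈ S, ∀ w ∈ S, ρ v < ρ w → ∀ f k, g v (Function.update f w k) = g v f)
    (hM : ∀ v ∈ S, ∀ f, ∑ k, g v (Function.update f v k) ≤ M v * Fintype.card K) :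
    ∑ f : V → K, ∏ v ∈ S, g v f ≤ (∏ v ∈ S, M v) * Fintype.card (V → K) := by
  induction S using Finset.induction_on_max_value ρ with
  | empty => simp
  | insert a s ha hmax ih =>
    have hK : (0 : ℝ) < Fintype.card K := by exact_mod_cast Fintype.card_pos
    have hM0 : 0 ≤ M a := by
      obtain ⟨k⟩ := ‹Nonempty K›
      have := hM a (by simp) (fun _ => k)
      have h2 : 0 ≤ ∑ k', g a (Function.update (fun _ => k) a k') :=
        Finset.sum_nonneg fun _ _ => h0 _ _
      by_contra hneg
      push Not at hneg
      nlinarith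
    have ih' := ih (fun v hv w hw => hinv v (Finset.mem_insert_of_mem hv) w
      (Finset.mem_insert_of_mem hw)) (fun v hv => hM v (Finset.mem_insert_of_mem hv))
    have key : (Fintype.card K : ℝ) * ∑ f : V → K, ∏ v ∈ insert a s, g v f ≤
        (Fintype.card K : ℝ) * (M a * ∑ f : V → K, ∏ v ∈ s, g v f) := by
      rw [← xavg _ a, Finset.mul_sum, Finset.mul_sum]
      refine Finset.sum_le_sum fun f _ => ?_
      have : ∀ k, ∏ v ∈ insert a s, g v (Function.update f a k) =
          g a (Function.update f a k) * ∏ v ∈ s, g v f := by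
        intro k
        rw [Finset.prod_insert ha]
        congr 1
        refine Finset.prod_congr rfl fun v hv => ?_
        refine hinv v (Finset.mem_insert_of_mem hv) a (by simp) ?_ f k
        exact lt_of_le_of_ne (hmax v hv) fun h => ha (hρ h ▸ hv)
      simp_rw [this]
      rw [← Finset.sum_mul]
      have h1 : 0 ≤ ∏ v ∈ s, g v f := Finset.prod_nonneg fun _ _ => h0 _ _
      have h2 := hM a (by simp) f
      nlinarith [mul_le_mul_of_nonneg_right h2 h1]
    have key2 := le_of_mul_le_mul_left key hK
    rw [Finset.prod_insert ha]
    calc _ ≤ _ := key2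
      _ ≤ M a * ((∏ v ∈ s, M v) * Fintype.card (V → K)) := mul_le_mul_of_nonneg_left ih' hM0
      _ = _ := by ring

open Classical in
theorem xindep {V K : Type*} [Fintype V] [Fintype K] (S : Finset V) (P Q : (V → K) → Prop)
    (hP : ∀ f g, (∀ x ∈ S, f x = g x) → (P f ↔ P g))
    (hQ : ∀ f g, (∀ x, x ∉ S → f x = g x) → (Q f ↔ Q g)) :
    (Finset.univ.filter fun f => P f ∧ Q f).card * Fintype.card (V → K) =
      (Finset.univ.filter P).card * (Finset.univ.filter Q).card := by
  rw [← Finset.card_univ, ← Finset.card_product, ← Finset.card_product]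
  refine Finset.card_nbij' (fun x => (S.piecewise x.1 x.2, S.piecewise x.2 x.1))
    (fun x => (S.piecewise x.1 x.2, S.piecewise x.2 x.1)) ?_ ?_ ?_ ?_
  · rintro ⟨f, g⟩ h
    simp only [Finset.coe_product, Finset.coe_filter, Set.mem_prod, Set.mem_ofPred_eq,
      Finset.mem_univ, true_and, Finset.coe_univ, Set.mem_univ, and_true] at h ⊢
    refine ⟨(hP _ _ ?_).1 h.1, (hQ _ _ ?_).1 h.2⟩
    · intro x hx; simp [hx]
    · intro x hx; simp [hx]
  · rintro ⟨f, g⟩ h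
    simp only [Finset.coe_product, Finset.coe_filter, Set.mem_prod, Set.mem_ofPred_eq,
      Finset.mem_univ, true_and, Finset.coe_univ, Set.mem_univ, and_true] at h ⊢
    refine ⟨(hP _ _ ?_).1 h.1, (hQ _ _ ?_).1 h.2⟩
    · intro x hx; simp [hx]
    · intro x hx; simp [hx]
  · rintro ⟨f, g⟩ _
    ext x <;> by_cases hx : x ∈ S <;> simp [hx]
  · rintro ⟨f, g⟩ _
    ext x <;> by_cases hx : x ∈ S <;> simp [hx]

open Classical in
theorem xlll_step {V K : Type*} [Fintype V] [Fintype K] [Nonempty K]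
    (A : V → (V → K) → Prop) (B : V → Finset V)
    (hA : ∀ u f g, (∀ x ∈ B u, f x = g x) → (A u f ↔ A u g)) (Δ : ℕ) (hΔ : 0 < Δ)
    (hdep : ∀ u, (Finset.univ.filter fun w => ¬ Disjoint (B u) (B w)).card ≤ Δ)
    (hp : ∀ u, 4 * Δ * (Finset.univ.filter (A u)).card ≤ Fintype.card (V → K)) (T : Finset V) :
    ∀ u, 2 * Δ * (Finset.univ.filter fun f => A u f ∧ ∀ w ∈ T, ¬ A w f).card ≤
      (Finset.univ.filter fun f => ∀ w ∈ T, ¬ A w f).card := by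
  induction T using Finset.strongInduction with
  | H T ih =>
    intro u
    set T2 := T.filter (fun w => Disjoint (B u) (B w)) with hT2
    set T1 := T.filter (fun w => ¬ Disjoint (B u) (B w)) with hT1
    have hΩ : 0 < Fintype.card (V → K) := Fintype.card_pos
    have h1 : (Finset.univ.filter fun f => A u f ∧ ∀ w ∈ T, ¬ A w f).card ≤
        (Finset.univ.filter fun f => A u f ∧ ∀ w ∈ T2, ¬ A w f).card := by
      apply Finset.card_le_card
      intro f
      simp only [Finset.mem_filter, Finset.mem_univ, true_and]
      exact fun h => ⟨h.1, fun w hw => h.2 w (Finset.mem_filter.1 hw).1⟩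
    have h2' := xindep (B u) (A u) (fun f => ∀ w ∈ T2, ¬ A w f) (hA u) (by
      intro f g hfg
      refine forall₂_congr fun w hw => not_congr (hA w f g fun x hx => hfg x ?_)
      exact fun hxu => Finset.disjoint_left.1 (Finset.mem_filter.1 hw).2 hxu hx)
    have h2 : (Finset.univ.filter fun f => A u f ∧ ∀ w ∈ T2, ¬ A w f).card *
        Fintype.card (V → K) = (Finset.univ.filter (A u)).card *
        (Finset.univ.filter fun f => ∀ w ∈ T2, ¬ A w f).card := by convert h2'
    have h3 : 4 * Δ * (Finset.univ.filter fun f => A u f ∧ ∀ w ∈ T2, ¬ A w f).card ≤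
        (Finset.univ.filter fun f => ∀ w ∈ T2, ¬ A w f).card := by
      refine Nat.le_of_mul_le_mul_right ?_ hΩ
      rw [mul_assoc, h2, ← mul_assoc, mul_comm _ (Fintype.card (V → K))]
      exact Nat.mul_le_mul_right _ (hp u)
    have h4 : (Finset.univ.filter fun f => ∀ w ∈ T2, ¬ A w f).card ≤
        2 * (Finset.univ.filter fun f => ∀ w ∈ T, ¬ A w f).card := by
      rcases T1.eq_empty_or_nonempty with he | ⟨w0, hw0⟩
      · have : T2 = T := by
          apply Finset.filter_true_of_mem
          intro w hw
          by_contra hd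
          have : w ∈ T1 := Finset.mem_filter.2 ⟨hw, hd⟩
          rw [he] at this; simp at this
        rw [this]; omega
      · have hss : T2 ⊂ T := by
          refine Finset.filter_ssubset.2 ⟨w0, (Finset.mem_filter.1 hw0).1, (Finset.mem_filter.1 hw0).2⟩
        have ih2 := ih T2 hss
        have hsub : (Finset.univ.filter fun f => ∀ w ∈ T2, ¬ A w f) ⊆
            (Finset.univ.filter fun f => ∀ w ∈ T, ¬ A w f) ∪
            T1.biUnion fun w => Finset.univ.filter fun f => A w f ∧ ∀ w ∈ T2, ¬ A w f := by
          intro f hf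
          simp only [Finset.mem_filter, Finset.mem_univ, true_and, Finset.mem_union,
            Finset.mem_biUnion] at hf ⊢
          by_cases h : ∀ w ∈ T, ¬ A w f
          · exact Or.inl h
          · push Not at h
            obtain ⟨w, hw, hwA⟩ := h
            refine Or.inr ⟨w, ?_, hwA, hf⟩
            refine Finset.mem_filter.2 ⟨hw, fun hd => ?_⟩
            exact hf w (Finset.mem_filter.2 ⟨hw, hd⟩) hwA
        have hc := (Finset.card_le_card hsub).trans ((Finset.card_union_le _ _).trans
          (Nat.add_le_add_left Finset.card_biUnion_le _))
        have hT1c : T1.card ≤ Δ := le_trans (Finset.card_le_card (by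
          intro w hw
          simp only [Finset.mem_filter, Finset.mem_univ, true_and]
          exact (Finset.mem_filter.1 hw).2)) (hdep u)
        have hs : 2 * Δ * ∑ w ∈ T1, (Finset.univ.filter fun f => A w f ∧ ∀ w ∈ T2, ¬ A w f).card ≤
            Δ * (Finset.univ.filter fun f => ∀ w ∈ T2, ¬ A w f).card := by
          rw [Finset.mul_sum]
          refine (Finset.sum_le_card_nsmul _ _ _ fun w _ => ih2 w).trans ?_
          rw [smul_eq_mul]
          exact Nat.mul_le_mul_right _ hT1c
        have hs' : 2 * ∑ w ∈ T1, (Finset.univ.filter fun f => A w f ∧ ∀ w ∈ T2, ¬ A w f).card ≤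
            (Finset.univ.filter fun f => ∀ w ∈ T2, ¬ A w f).card := by
          refine Nat.le_of_mul_le_mul_left ?_ hΔ
          linarith
        omega
    have h5 := Nat.mul_le_mul_left (4 * Δ) h1
    have : 2 * (2 * Δ * (Finset.univ.filter fun f => A u f ∧ ∀ w ∈ T, ¬ A w f).card) ≤
      2 * (Finset.univ.filter fun f => ∀ w ∈ T, ¬ A w f).card := by linarith
    omega

open Classical in
theorem xlll {V K : Type*} [Fintype V] [Fintype K] [Nonempty K]
    (A : V → (V → K) → Prop) (B : V → Finset V)
    (hA : ∀ u f g, (∀ x ∈ B u, f x = g x) → (A u f ↔ A u g)) (Δ : ℕ) (hΔ : 0 < Δ)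
    (hdep : ∀ u, (Finset.univ.filter fun w => ¬ Disjoint (B u) (B w)).card ≤ Δ)
    (hp : ∀ u, 4 * Δ * (Finset.univ.filter (A u)).card ≤ Fintype.card (V → K)) :
    ∃ f, ∀ u, ¬ A u f := by
  have key : ∀ T : Finset V, 0 < (Finset.univ.filter fun f => ∀ w ∈ T, ¬ A w f).card := by
    intro T
    induction T using Finset.induction_on with
    | empty => simp [Fintype.card_pos]
    | insert u T hu ih =>
      have h1 := xlll_step A B hA Δ hΔ hdep hp T u
      have h2 : (Finset.univ.filter fun f => ∀ w ∈ T, ¬ A w f) ⊆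
          (Finset.univ.filter fun f => ∀ w ∈ insert u T, ¬ A w f) ∪
          (Finset.univ.filter fun f => A u f ∧ ∀ w ∈ T, ¬ A w f) := by
        intro f hf
        simp only [Finset.mem_filter, Finset.mem_univ, true_and, Finset.mem_union,
          Finset.mem_insert, forall_eq_or_imp] at hf ⊢
        tauto
      have h3 := (Finset.card_le_card h2).trans (Finset.card_union_le _ _)
      have h4 : 2 * (Finset.univ.filter fun f => A u f ∧ ∀ w ∈ T, ¬ A w f).card ≤
          2 * Δ * (Finset.univ.filter fun f => A u f ∧ ∀ w ∈ T, ¬ A w f).card := by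
        apply Nat.mul_le_mul_right; omega
      omega
  obtain ⟨f, hf⟩ := Finset.card_pos.1 (key Finset.univ)
  exact ⟨f, fun u => (Finset.mem_filter.1 hf).2 u (by simp)⟩

section stage1
open Classical

variable {V K Λ : Type} [Fintype V] [Fintype K] [Fintype Λ]
variable (N : V → Finset V) (adj : Λ → K → Prop) (emb : K → Λ) (d r t s : ℕ) (ρ : V → ℕ)

noncomputable def xO (f : V → K) (u : V) (l : Λ) : Finset V :=
  (N u).filter fun v => ∃ u' ∈ N v, u' ≠ u ∧ emb (f u') = l

noncomputable def xOo (f : V → K) (u v : V) (l : Λ) : Finset V :=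
  (N v).filter fun x => ∃ v' ∈ N x, v' ∉ N u ∧ emb (f v') = l

noncomputable def xM (f : V → K) (u : V) (l : Λ) : Finset V :=
  if 4 * (xO N emb f u l).card ≤ d then N u \ xO N emb f u l else N u

noncomputable def xG (f : V → K) (u : V) (l : Λ) (v : V) : Finset K :=
  Finset.univ.filter fun c => adj l c ∧ 4 * (xOo N emb f u v (emb c)).card ≤ d

noncomputable def xG' (f : V → K) (u : V) (l : Λ) (v : V) : Finset K :=
  if r ≤ 2 * (xG N adj emb d f u l v).card then xG N adj emb d f u l v
  else Finset.univ.filter (adj l)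

noncomputable def xP (f : V → K) (u : V) (l : Λ) (v : V) : Finset K :=
  ((N u).filter fun w => ρ w < ρ v ∧ adj l (f w)).image f

noncomputable def xP' (f : V → K) (u : V) (l : Λ) (v : V) : Finset K :=
  if (xP N adj ρ f u l v).card ≤ t then xP N adj ρ f u l v else ∅

noncomputable def xY (f : V → K) (u : V) (l : Λ) : Finset V :=
  (xM N emb d f u l).filter fun v => f v ∈ xG' N adj emb d r f u l v

noncomputable def xZ (f : V → K) (u : V) (l : Λ) : Finset V :=
  (N u).filter fun v => f v ∈ xP' N adj t ρ f u l v

def xA1 (u : V) (l : Λ) (f : V → K) : Prop :=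
  t < ((N u).filter fun v => adj l (f v)).card

def xA2 (u : V) (l : Λ) (f : V → K) : Prop :=
  (xY N adj emb d r f u l).card < s + 2 * (xZ N adj t ρ f u l).card

def xA (u : V) (f : V → K) : Prop :=
  ∃ l, xA1 N adj t u l f ∨ xA2 N adj emb d r t s ρ u l f

def xgood (f : V → K) (v : V) : Prop := 4 * (xO N emb f v (emb (f v))).card ≤ d

noncomputable def xnb (S : Finset V) : Finset V := S ∪ S.biUnion N

theorem xnb_sub (S : Finset V) : S ⊆ xnb N S := Finset.subset_union_left

theorem xnb_mem {S : Finset V} {x y : V} (hx : x ∈ S) (hy : y ∈ N x) : y ∈ xnb N S :=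
  Finset.mem_union_right _ (Finset.mem_biUnion.2 ⟨x, hx, hy⟩)

theorem xnb_card (hd : ∀ u, (N u).card ≤ d) (S : Finset V) :
    (xnb N S).card ≤ S.card * (d + 1) := by
  unfold xnb
  refine (Finset.card_union_le _ _).trans ?_
  have := Finset.card_biUnion_le_card_mul S N d (fun u _ => hd u)
  rw [mul_add, mul_one]; omega

theorem xnb_symm (hsymm : ∀ u v, v ∈ N u → u ∈ N v) {S : Finset V} {x : V} (hx : x ∈ xnb N S) :
    ∃ y ∈ S, y ∈ xnb N {x} := by
  unfold xnb at hx ⊢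
  rcases Finset.mem_union.1 hx with h | h
  · exact ⟨x, h, by simp⟩
  · obtain ⟨y, hy, hxy⟩ := Finset.mem_biUnion.1 h
    exact ⟨y, hy, by simp [hsymm _ _ hxy]⟩

theorem xnb_mono {S T : Finset V} (h : S ⊆ T) : xnb N S ⊆ xnb N T :=
  Finset.union_subset_union h (Finset.biUnion_subset_biUnion_of_subset_left _ h)

noncomputable def xB (u : V) : Finset V := xnb N (xnb N (xnb N {u}))

theorem xB_dep (hsymm : ∀ u v, v ∈ N u → u ∈ N v) (hd : ∀ u, (N u).card ≤ d) (u : V) :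
    (Finset.univ.filter fun w => ¬ Disjoint (xB N u) (xB N w)).card ≤ (d + 1) ^ 6 := by
  have hsub : (Finset.univ.filter fun w => ¬ Disjoint (xB N u) (xB N w)) ⊆
      xnb N (xnb N (xnb N (xB N u))) := by
    intro w hw
    have hw := (Finset.mem_filter.1 hw).2
    obtain ⟨x, hxu, hxw⟩ := Finset.not_disjoint_iff.1 hw
    obtain ⟨y1, hy1, hx1⟩ := xnb_symm N hsymm hxw
    obtain ⟨y2, hy2, hx2⟩ := xnb_symm N hsymm hy1
    obtain ⟨y3, hy3, hx3⟩ := xnb_symm N hsymm hy2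
    rw [Finset.mem_singleton] at hy3
    subst hy3
    have a1 : y1 ∈ xnb N (xB N u) := xnb_mono N (Finset.singleton_subset_iff.2 hxu) hx1
    have a2 : y2 ∈ xnb N (xnb N (xB N u)) := xnb_mono N (Finset.singleton_subset_iff.2 a1) hx2
    exact xnb_mono N (Finset.singleton_subset_iff.2 a2) hx3
  refine (Finset.card_le_card hsub).trans ?_
  unfold xB
  have h := fun S => xnb_card N d hd S
  calc _ ≤ _ := h _
    _ ≤ _ := Nat.mul_le_mul_right _ (h _)
    _ ≤ _ := Nat.mul_le_mul_right _ (Nat.mul_le_mul_right _ (h _))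
    _ ≤ _ := Nat.mul_le_mul_right _ (Nat.mul_le_mul_right _ (Nat.mul_le_mul_right _ (h _)))
    _ ≤ _ := Nat.mul_le_mul_right _ (Nat.mul_le_mul_right _ (Nat.mul_le_mul_right _
        (Nat.mul_le_mul_right _ (h _))))
    _ ≤ _ := Nat.mul_le_mul_right _ (Nat.mul_le_mul_right _ (Nat.mul_le_mul_right _
        (Nat.mul_le_mul_right _ (Nat.mul_le_mul_right _ (h _)))))
    _ = _ := by rw [Finset.card_singleton]; ring

-- congruence lemmas
theorem xM_congr (u : V) (l : Λ) (f g : V → K) (h : ∀ v ∈ N u, ∀ u' ∈ N v, f u' = g u') :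
    xM N emb d f u l = xM N emb d g u l := by
  have : xO N emb f u l = xO N emb g u l := by
    unfold xO
    refine Finset.filter_congr fun v hv => ?_
    refine exists_congr fun u' => and_congr_right fun hu' => ?_
    rw [h v hv u' hu']
  unfold xM; rw [this]

theorem xG_congr (u v : V) (l : Λ) (f g : V → K)
    (h : ∀ x ∈ N v, ∀ v' ∈ N x, v' ∉ N u → f v' = g v') :
    xG' N adj emb d r f u l v = xG' N adj emb d r g u l v := by
  have h1 : ∀ c, xOo N emb f u v (emb c) = xOo N emb g u v (emb c) := by
    intro c
    unfold xOo
    refine Finset.filter_congr fun x hx => ?_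
    refine exists_congr fun v' => and_congr_right fun hv' => and_congr_right fun hv'' => ?_
    rw [h x hx v' hv' hv'']
  have h2 : xG N adj emb d f u l v = xG N adj emb d g u l v := by
    unfold xG; simp_rw [h1]
  unfold xG'; rw [h2]

theorem xP_congr (u v : V) (l : Λ) (f g : V → K) (h : ∀ x ∈ N u, ρ x < ρ v → f x = g x) :
    xP' N adj t ρ f u l v = xP' N adj t ρ g u l v := by
  have : xP N adj ρ f u l v = xP N adj ρ g u l v := by
    unfold xP
    have h1 : ((N u).filter fun w => ρ w < ρ v ∧ adj l (f w)) =
        ((N u).filter fun w => ρ w < ρ v ∧ adj l (g w)) := by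
      refine Finset.filter_congr fun x hx => and_congr_right fun hr => ?_
      rw [h x hx hr]
    rw [h1]
    refine Finset.image_congr fun x hx => ?_
    have hx := Finset.mem_filter.1 (Finset.mem_coe.1 hx)
    exact h x hx.1 hx.2.1
  unfold xP'; rw [this]

theorem xM_sub (f : V → K) (u : V) (l : Λ) : xM N emb d f u l ⊆ N u := by
  unfold xM; split_ifs
  · exact Finset.sdiff_subset
  · exact subset_rfl

theorem xA_congr (u : V) (f g : V → K) (h : ∀ x ∈ xB N u, f x = g x) :
    xA N adj emb d r t s ρ u f ↔ xA N adj emb d r t s ρ u g := by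
  have hu : u ∈ ({u} : Finset V) := by simp
  have h1 : ∀ v ∈ N u, f v = g v := fun v hv =>
    h v (xnb_sub N _ (xnb_sub N _ (xnb_mem N hu hv)))
  have h2 : ∀ v ∈ N u, ∀ u' ∈ N v, f u' = g u' := fun v hv u' hu' =>
    h u' (xnb_sub N _ (xnb_mem N (xnb_mem N hu hv) hu'))
  have h3 : ∀ v ∈ N u, ∀ x ∈ N v, ∀ v' ∈ N x, f v' = g v' := fun v hv x hx v' hv' =>
    h v' (xnb_mem N (xnb_mem N (xnb_mem N hu hv) hx) hv')
  unfold xA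
  refine exists_congr fun l => or_congr ?_ ?_
  · unfold xA1
    have : ((N u).filter fun v => adj l (f v)) = ((N u).filter fun v => adj l (g v)) :=
      Finset.filter_congr fun v hv => by rw [h1 v hv]
    rw [this]
  · unfold xA2
    have e1 : xY N adj emb d r f u l = xY N adj emb d r g u l := by
      unfold xY
      rw [xM_congr N emb d u l f g h2]
      refine Finset.filter_congr fun v hv => ?_
      have hv := xM_sub N emb d g u l hv
      rw [h1 v hv, xG_congr N adj emb d r u v l f g (fun x hx v' hv' _ => h3 v hv x hx v' hv')]
    have e2 : xZ N adj t ρ f u l = xZ N adj t ρ g u l := by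
      unfold xZ
      refine Finset.filter_congr fun v hv => ?_
      rw [h1 v hv, xP_congr N adj t ρ u v l f g (fun x hx _ => h1 x hx)]
    rw [e1, e2]

theorem xA1_bound [Nonempty K] (hρ : Function.Injective ρ) (hd : ∀ u, (N u).card ≤ d)
    (hr : ∀ l, (Finset.univ.filter (adj l)).card = r) (u : V) (l : Λ) :
    ((Finset.univ.filter (xA1 N adj t u l)).card : ℝ) * 2 ^ t ≤
      Real.exp (r * d / Fintype.card K) * Fintype.card (V → K) := by
  have hK : (0 : ℝ) < Fintype.card K := by exact_mod_cast Fintype.card_pos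
  have h := xseq (K := K) ρ hρ (N u) (fun v f => if adj l (f v) then 2 else 1)
    (fun _ => 1 + r / Fintype.card K) (fun v f => by split_ifs <;> norm_num)
    (fun v hv w hw hvw f k => by
      have : v ≠ w := fun h => by simp [h] at hvw
      simp only [Function.update_of_ne this])
    (fun v hv f => by
      simp only [Function.update_self]
      have : ∀ k, (if adj l k then (2 : ℝ) else 1) = 1 + if adj l k then 1 else 0 := by
        intro k; split_ifs <;> norm_num
      simp_rw [this]
      rw [Finset.sum_add_distrib, Finset.sum_boole, hr]
      simp only [Finset.sum_const, Finset.card_univ, nsmul_eq_mul, mul_one]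
      rw [add_mul, div_mul_cancel₀ _ hK.ne', one_mul])
  have h1 : ((Finset.univ.filter (xA1 N adj t u l)).card : ℝ) * 2 ^ t ≤
      ∑ f : V → K, ∏ v ∈ N u, (if adj l (f v) then (2 : ℝ) else 1) := by
    rw [← nsmul_eq_mul, ← Finset.sum_const]
    refine (Finset.sum_le_sum (fun f hf => ?_)).trans (Finset.sum_le_univ_sum_of_nonneg
      (s := Finset.univ.filter (xA1 N adj t u l))
      fun f => Finset.prod_nonneg fun v _ => by split_ifs <;> norm_num)
    have hf : t < ((N u).filter fun v => adj l (f v)).card := (Finset.mem_filter.1 hf).2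
    rw [Finset.prod_ite, Finset.prod_const, Finset.prod_const_one, mul_one]
    exact pow_le_pow_right₀ (by norm_num) hf.le
  refine h1.trans (h.trans ?_)
  refine mul_le_mul_of_nonneg_right ?_ (Nat.cast_nonneg _)
  rw [Finset.prod_const]
  have h0 : (0 : ℝ) ≤ r / Fintype.card K := by positivity
  calc (1 + (r : ℝ) / Fintype.card K) ^ (N u).card ≤ (1 + (r : ℝ) / Fintype.card K) ^ d :=
        pow_le_pow_right₀ (by linarith) (hd u)
    _ ≤ (Real.exp (r / Fintype.card K)) ^ d := by
        refine pow_le_pow_left₀ (by linarith) ?_ _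
        have := Real.add_one_le_exp ((r : ℝ) / Fintype.card K)
        linarith
    _ = _ := by rw [← Real.exp_nat_mul]; congr 1; ring

theorem xM_card (hd2 : ∀ u, d ≤ 2 * (N u).card) (f : V → K) (u : V) (l : Λ) :
    d ≤ 4 * (xM N emb d f u l).card := by
  have h := hd2 u
  unfold xM; split_ifs with h1
  · have := Finset.le_card_sdiff (xO N emb f u l) (N u)
    omega
  · omega

theorem xA2_bound [Nonempty K] (hρ : Function.Injective ρ) (hd : ∀ u, (N u).card ≤ d)
    (hd2 : ∀ u, d ≤ 2 * (N u).card) (σ : V → Bool) (hσ : ∀ u, ∀ v ∈ N u, σ v ≠ σ u)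
    (hr : ∀ l, (Finset.univ.filter (adj l)).card = r) (u : V) (l : Λ) :
    ((Finset.univ.filter (xA2 N adj emb d r t s ρ u l)).card : ℝ) ≤ 2 ^ s *
      Real.exp (- (r * d / (16 * Fintype.card K)) + 3 * t * d / Fintype.card K) *
      Fintype.card (V → K) := by
  have hK : (0 : ℝ) < Fintype.card K := by exact_mod_cast Fintype.card_pos
  set n : ℝ := ((Fintype.card K : ℕ) : ℝ) with hn
  have hMup : ∀ w ∈ N u, ∀ f k, xM N emb d (Function.update f w k) u l = xM N emb d f u l := by
    intro w hw f k
    refine xM_congr N emb d u l _ _ fun v hv u' hu' => ?_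
    refine Function.update_of_ne ?_ _ _
    rintro rfl
    have a := hσ u _ hw
    have b := hσ u _ hv
    have c := hσ v _ hu'
    revert a b c
    cases σ u <;> cases σ v <;> cases σ u' <;> simp
  have hGup : ∀ v, ∀ w ∈ N u, ∀ f k, xG' N adj emb d r (Function.update f w k) u l v =
      xG' N adj emb d r f u l v := by
    intro v w hw f k
    refine xG_congr N adj emb d r u v l _ _ fun x hx v' hv' hv'' => ?_
    refine Function.update_of_ne ?_ _ _
    rintro rfl
    exact hv'' hw
  have hPup : ∀ v, ∀ w ∈ N u, ρ v ≤ ρ w → ∀ f k, xP' N adj t ρ (Function.update f w k) u l v =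
      xP' N adj t ρ f u l v := by
    intro v w hw hvw f k
    refine xP_congr N adj t ρ u v l _ _ fun x hx hxv => ?_
    refine Function.update_of_ne ?_ _ _
    rintro rfl
    omega
  have hG'c : ∀ f v, (r : ℝ) ≤ 2 * (xG' N adj emb d r f u l v).card := by
    intro f v
    have : r ≤ 2 * (xG' N adj emb d r f u l v).card := by
      unfold xG'; split_ifs with h
      · exact h
      · rw [hr]; omega
    exact_mod_cast this
  have hP'c : ∀ f v, ((xP' N adj t ρ f u l v).card : ℝ) ≤ t := by
    intro f v
    have : (xP' N adj t ρ f u l v).card ≤ t := by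
      unfold xP'; split_ifs with h
      · exact h
      · simp
    exact_mod_cast this
  let g : V → (V → K) → ℝ := fun v f =>
    ((if v ∈ xM N emb d f u l ∧ f v ∈ xG' N adj emb d r f u l v then (1 / 2 : ℝ) else 1) *
     (if f v ∈ xP' N adj t ρ f u l v then 4 else 1)) *
    Real.exp ((if v ∈ xM N emb d f u l then r / (4 * n) else 0) - 3 * t / n)
  have g0 : ∀ v f, 0 ≤ g v f := by
    intro v f
    refine mul_nonneg (mul_nonneg ?_ ?_) (Real.exp_pos _).le <;> split_ifs <;> norm_num
  have h := xseq (K := K) ρ hρ (N u) g (fun _ => 1) g0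
    (fun v hv w hw hvw f k => by
      have : v ≠ w := fun h => by simp [h] at hvw
      simp only [g, hMup w hw, hGup v w hw, hPup v w hw hvw.le, Function.update_of_ne this])
    (fun v hv f => by
      simp only [g, hMup v hv, hGup v v hv, hPup v v hv le_rfl, Function.update_self]
      rw [← Finset.sum_mul, one_mul]
      set x : ℝ := (if v ∈ xM N emb d f u l then r / (4 * n) else 0) with hx
      have hle : ∑ k, ((if v ∈ xM N emb d f u l ∧ k ∈ xG' N adj emb d r f u l v then (1 / 2 : ℝ)
          else 1) * (if k ∈ xP' N adj t ρ f u l v then 4 else 1)) ≤ n * (1 - x + 3 * t / n) := by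
        have e1 : ∀ k, ((if v ∈ xM N emb d f u l ∧ k ∈ xG' N adj emb d r f u l v then (1 / 2 : ℝ)
          else 1) * (if k ∈ xP' N adj t ρ f u l v then 4 else 1)) ≤
            (1 - (if v ∈ xM N emb d f u l then (1 / 2 : ℝ) else 0) *
              (if k ∈ xG' N adj emb d r f u l v then 1 else 0)) +
            3 * (if k ∈ xP' N adj t ρ f u l v then 1 else 0) := by
          intro k
          by_cases a : v ∈ xM N emb d f u l <;> by_cases b : k ∈ xG' N adj emb d r f u l v <;>
            by_cases c : k ∈ xP' N adj t ρ f u l v <;> simp [a, b, c] <;> norm_num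
        refine (Finset.sum_le_sum fun k _ => e1 k).trans ?_
        rw [Finset.sum_add_distrib, Finset.sum_sub_distrib, ← Finset.mul_sum, ← Finset.mul_sum,
          Finset.sum_boole, Finset.sum_boole]
        simp only [Finset.sum_const, Finset.card_univ, nsmul_eq_mul, mul_one, Finset.filter_mem_eq_inter,
          Finset.univ_inter]
        rw [← hn]
        have q1 := hG'c f v
        have q2 := hP'c f v
        have e2 : n * (1 - x + 3 * t / n) = n - n * x + 3 * t := by field_simp
        rw [e2]
        have e3 : n * x ≤ (if v ∈ xM N emb d f u l then (1 / 2 : ℝ) else 0) *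
            (xG' N adj emb d r f u l v).card := by
          rw [hx]; split_ifs
          · have : n * (r / (4 * n)) = r / 4 := by field_simp
            rw [this]; linarith
          · simp
        linarith
      have he := Real.add_one_le_exp (3 * t / n - x)
      have : Real.exp (x - 3 * t / n) * Real.exp (3 * t / n - x) = 1 := by
        rw [← Real.exp_add]; simp
      calc _ ≤ n * (1 - x + 3 * t / n) * Real.exp (x - 3 * t / n) :=
            mul_le_mul_of_nonneg_right hle (Real.exp_pos _).le
        _ ≤ n * Real.exp (3 * t / n - x) * Real.exp (x - 3 * t / n) := by
            refine mul_le_mul_of_nonneg_right (mul_le_mul_of_nonneg_left ?_ hK.le)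
              (Real.exp_pos _).le
            linarith
        _ = n := by rw [mul_assoc, mul_comm (Real.exp _), this, mul_one])
  rw [Finset.prod_const_one, one_mul] at h
  set D : ℝ := - (r * d / (16 * n)) + 3 * t * d / n with hD
  have hcore : ((Finset.univ.filter (xA2 N adj emb d r t s ρ u l)).card : ℝ) *
      ((1 / 2) ^ s * Real.exp (-D)) ≤ ∑ f : V → K, ∏ v ∈ N u, g v f := by
    rw [← nsmul_eq_mul, ← Finset.sum_const]
    refine (Finset.sum_le_sum (fun f hf => ?_)).trans (Finset.sum_le_univ_sum_of_nonneg
      (s := Finset.univ.filter (xA2 N adj emb d r t s ρ u l))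
      fun f => Finset.prod_nonneg fun v _ => g0 v f)
    have hf : (xY N adj emb d r f u l).card < s + 2 * (xZ N adj t ρ f u l).card :=
      (Finset.mem_filter.1 hf).2
    simp only [g]
    rw [Finset.prod_mul_distrib, Finset.prod_mul_distrib, ← Real.exp_sum]
    have hMs := xM_sub N emb d f u l
    have p1 : ∏ v ∈ N u, (if v ∈ xM N emb d f u l ∧ f v ∈ xG' N adj emb d r f u l v
        then (1 / 2 : ℝ) else 1) = (1 / 2) ^ (xY N adj emb d r f u l).card := by
      rw [Finset.prod_ite, Finset.prod_const, Finset.prod_const_one, mul_one]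
      congr 2
      ext v
      simp only [xY, Finset.mem_filter]
      constructor
      · rintro ⟨_, h⟩; exact h
      · intro h; exact ⟨hMs h.1, h⟩
    have p2 : ∏ v ∈ N u, (if f v ∈ xP' N adj t ρ f u l v then (4 : ℝ) else 1) =
        4 ^ (xZ N adj t ρ f u l).card := by
      rw [Finset.prod_ite, Finset.prod_const, Finset.prod_const_one, mul_one]; rfl
    have p3 : -D ≤ ∑ v ∈ N u, ((if v ∈ xM N emb d f u l then r / (4 * n) else 0) - 3 * t / n) := by
      rw [Finset.sum_sub_distrib, ← Finset.sum_filter, Finset.sum_const, Finset.sum_const,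
        nsmul_eq_mul, nsmul_eq_mul, Finset.filter_mem_eq_inter, Finset.inter_eq_right.2 hMs]
      have m1 : (d : ℝ) ≤ 4 * (xM N emb d f u l).card := by
        exact_mod_cast xM_card N emb d hd2 f u l
      have m2 : ((N u).card : ℝ) ≤ d := by exact_mod_cast hd u
      have q1 : r * d / (16 * n) ≤ (xM N emb d f u l).card * (r / (4 * n)) := by
        have : (xM N emb d f u l).card * (r / (4 * n)) =
          r * (4 * (xM N emb d f u l).card) / (16 * n) := by field_simp; norm_num
        rw [this]
        gcongr
      have q2 : (N u).card * (3 * t / n) ≤ 3 * t * d / n := by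
        have : 3 * t * d / n = d * (3 * t / n) := by ring
        rw [this]
        gcongr
      rw [hD]; linarith
    rw [p1, p2]
    refine mul_le_mul ?_ (Real.exp_le_exp.2 p3) (Real.exp_pos _).le (by positivity)
    have : (4 : ℝ) ^ (xZ N adj t ρ f u l).card = 2 ^ (2 * (xZ N adj t ρ f u l).card) := by
      rw [pow_mul]; norm_num
    rw [this, one_div, inv_pow, inv_pow, inv_le_iff_one_le_mul₀ (by positivity)]
    rw [mul_comm, ← mul_assoc, mul_right_comm, ← pow_add, ← div_eq_mul_inv, le_div_iff₀ (by positivity), one_mul]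
    exact pow_le_pow_right₀ (by norm_num) (by omega)
  have hfin := hcore.trans h
  have e : ((1 / 2 : ℝ) ^ s * Real.exp (-D)) * (2 ^ s * Real.exp D) = 1 := by
    have a : (1 / 2 : ℝ) ^ s * 2 ^ s = 1 := by rw [← mul_pow]; norm_num
    have b : Real.exp (-D) * Real.exp D = 1 := by rw [← Real.exp_add]; simp
    calc _ = ((1 / 2 : ℝ) ^ s * 2 ^ s) * (Real.exp (-D) * Real.exp D) := by ring
      _ = 1 := by rw [a, b, one_mul]
  calc ((Finset.univ.filter (xA2 N adj emb d r t s ρ u l)).card : ℝ)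
      = ((Finset.univ.filter (xA2 N adj emb d r t s ρ u l)).card : ℝ) *
      ((1 / 2) ^ s * Real.exp (-D)) * (2 ^ s * Real.exp D) := by rw [mul_assoc, e, mul_one]
    _ ≤ (Fintype.card (V → K)) * (2 ^ s * Real.exp D) :=
        mul_le_mul_of_nonneg_right hfin (by positivity)
    _ = _ := by ring

end stage1

section stage1b
open Classical

variable {V K Λ : Type} [Fintype V] [Fintype K] [Fintype Λ]
variable (N : V → Finset V) (adj : Λ → K → Prop) (emb : K → Λ) (d r t s : ℕ) (ρ : V → ℕ)

theorem xG_card (hsymm : ∀ u v, v ∈ N u → u ∈ N v) (hd : ∀ u, (N u).card ≤ d) (hd0 : 0 < d)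
    (hemb : Function.Injective emb)
    (hr : ∀ l, (Finset.univ.filter (adj l)).card = r) (h8 : 8 * t ≤ r) (f : V → K)
    (hf : ∀ u l, ((N u).filter fun v => adj l (f v)).card ≤ t) (u : V) (l : Λ) (v : V) :
    r ≤ 2 * (xG N adj emb d f u l v).card := by
  set b := (Finset.univ.filter fun c => adj l c ∧ ¬ 4 * (xOo N emb f u v (emb c)).card ≤ d) with hb
  have h1 : (xG N adj emb d f u l v).card + b.card = r := by
    rw [← hr l, hb, xG, ← Finset.filter_filter, ← Finset.filter_filter]
    exact Finset.card_filter_add_card_filter_not _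
  have h2 : b.card * d ≤ ∑ c ∈ Finset.univ.filter (adj l), 4 * (xOo N emb f u v (emb c)).card := by
    calc b.card * d = ∑ c ∈ b, d := by simp
      _ ≤ ∑ c ∈ b, 4 * (xOo N emb f u v (emb c)).card := by
          refine Finset.sum_le_sum fun c hc => ?_
          have := (Finset.mem_filter.1 hc).2.2
          omega
      _ ≤ _ := by
          refine Finset.sum_le_sum_of_subset fun c hc => ?_
          exact Finset.mem_filter.2 ⟨by simp, (Finset.mem_filter.1 hc).2.1⟩
  have h3 : ∑ c ∈ Finset.univ.filter (adj l), (xOo N emb f u v (emb c)).card ≤ d * t := by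
    have : ∀ c, (xOo N emb f u v (emb c)).card =
        ∑ x ∈ N v, if ∃ v' ∈ N x, v' ∉ N u ∧ emb (f v') = emb c then 1 else 0 := by
      intro c; unfold xOo; rw [Finset.card_filter]
    simp_rw [this]
    rw [Finset.sum_comm]
    calc _ ≤ ∑ x ∈ N v, t := by
          refine Finset.sum_le_sum fun x hx => ?_
          rw [← Finset.card_filter, Finset.filter_filter]
          refine le_trans ?_ (hf x l)
          refine le_trans (Finset.card_le_card ?_) (Finset.card_image_le (f := f))
          intro c hc
          obtain ⟨_, hc1, v', hv', _, hv2⟩ := Finset.mem_filter.1 hc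
          have := hemb hv2
          exact Finset.mem_image.2 ⟨v', Finset.mem_filter.2 ⟨hv', this ▸ hc1⟩, this⟩
      _ = (N v).card * t := by simp
      _ ≤ d * t := Nat.mul_le_mul_right _ (hd v)
  rw [← Finset.mul_sum] at h2
  have h4 : b.card * d ≤ (4 * t) * d := by nlinarith
  have h5 := Nat.le_of_mul_le_mul_right h4 hd0
  omega

theorem xNU_card (hρ : Function.Injective ρ) (f : V → K) (u : V) (l : Λ)
    (hf : ((N u).filter fun v => adj l (f v)).card ≤ t) :
    ((N u).filter fun v => adj l (f v) ∧ ∃ v' ∈ N u, v' ≠ v ∧ f v' = f v).card ≤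
      2 * (xZ N adj t ρ f u l).card := by
  have hZ : ∀ v, v ∈ xZ N adj t ρ f u l ↔
      v ∈ N u ∧ ∃ w ∈ N u, ρ w < ρ v ∧ adj l (f w) ∧ f w = f v := by
    intro v
    have : xP' N adj t ρ f u l v = xP N adj ρ f u l v := by
      unfold xP'
      rw [if_pos]
      refine Finset.card_image_le.trans (le_trans (Finset.card_le_card ?_) hf)
      intro w hw
      have := Finset.mem_filter.1 hw
      exact Finset.mem_filter.2 ⟨this.1, this.2.2⟩
    simp only [xZ, this, Finset.mem_filter, xP, Finset.mem_image]
    constructor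
    · rintro ⟨a, w, ⟨b, c, e⟩, g⟩; exact ⟨a, w, b, c, e, g⟩
    · rintro ⟨a, w, b, c, e, g⟩; exact ⟨a, w, ⟨b, c, e⟩, g⟩
  set F := (N u).filter fun v => adj l (f v) ∧ (∃ v' ∈ N u, v' ≠ v ∧ f v' = f v) ∧
    ∀ w ∈ N u, f w = f v → ρ v ≤ ρ w with hF
  have hsub : ((N u).filter fun v => adj l (f v) ∧ ∃ v' ∈ N u, v' ≠ v ∧ f v' = f v) ⊆
      xZ N adj t ρ f u l ∪ F := by
    intro v hv
    obtain ⟨hv1, hv2, hv3⟩ := Finset.mem_filter.1 hv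
    rw [Finset.mem_union]
    by_cases h : ∀ w ∈ N u, f w = f v → ρ v ≤ ρ w
    · exact Or.inr (Finset.mem_filter.2 ⟨hv1, hv2, hv3, h⟩)
    · push Not at h
      obtain ⟨w, hw, hw2, hw3⟩ := h
      exact Or.inl ((hZ v).2 ⟨hv1, w, hw, hw3, hw2 ▸ hv2, hw2⟩)
  have hFZ : F.card ≤ (xZ N adj t ρ f u l).card := by
    have : ∀ v ∈ F, ∃ w, w ∈ xZ N adj t ρ f u l ∧ f w = f v := by
      intro v hv
      obtain ⟨hv1, hv2, ⟨w, hw, hwv, hwf⟩, h4⟩ := Finset.mem_filter.1 hv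
      refine ⟨w, (hZ w).2 ⟨hw, v, hv1, ?_, hv2, hwf.symm⟩, hwf⟩
      exact lt_of_le_of_ne (h4 w hw hwf) fun h => hwv (hρ h).symm
    choose! φ hφ1 hφ2 using this
    refine Finset.card_le_card_of_injOn φ (fun v hv => hφ1 v hv) ?_
    intro a ha b hb hab
    have ha := Finset.mem_coe.1 ha
    have hb := Finset.mem_coe.1 hb
    have hfab : f a = f b := by rw [← hφ2 a ha, ← hφ2 b hb, hab]
    obtain ⟨ha1, _, _, ha4⟩ := Finset.mem_filter.1 ha
    obtain ⟨hb1, _, _, hb4⟩ := Finset.mem_filter.1 hb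
    exact hρ (le_antisymm (ha4 b hb1 hfab.symm) (hb4 a ha1 hfab))
  have := (Finset.card_le_card hsub).trans (Finset.card_union_le _ _)
  omega

theorem xstage1 [Nonempty K] (hsymm : ∀ u v, v ∈ N u → u ∈ N v) (hd : ∀ u, (N u).card ≤ d)
    (hd0 : 0 < d)
    (hd2 : ∀ u, d ≤ 2 * (N u).card) (σ : V → Bool) (hσ : ∀ u, ∀ v ∈ N u, σ v ≠ σ u)
    (hemb : Function.Injective emb)
    (hr : ∀ l, (Finset.univ.filter (adj l)).card = r) (h8 : 8 * t ≤ r)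
    (hnum : 4 * ((d : ℝ) + 1) ^ 6 * (Fintype.card Λ * (Real.exp (r * d / Fintype.card K) / 2 ^ t +
      2 ^ s * Real.exp (- (r * d / (16 * Fintype.card K)) + 3 * t * d / Fintype.card K))) ≤ 1) :
    ∃ f : V → K, ∀ u l, s ≤ ((xM N emb d f u l).filter fun v => adj l (f v) ∧
      xgood N emb d f v ∧ ∀ v' ∈ N u, v' ≠ v → f v' ≠ f v).card := by
  obtain ⟨ρ, hρ⟩ : ∃ ρ : V → ℕ, Function.Injective ρ :=
    ⟨fun v => (Fintype.equivFin V v : ℕ), fun a b h => (Fintype.equivFin V).injective (Fin.ext h)⟩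
  set ε := (Real.exp (r * d / Fintype.card K) / 2 ^ t +
      2 ^ s * Real.exp (- (r * d / (16 * Fintype.card K)) + 3 * t * d / Fintype.card K)) with hε
  obtain ⟨f, hf⟩ := xlll (xA N adj emb d r t s ρ) (xB N) (xA_congr N adj emb d r t s ρ)
    ((d + 1) ^ 6) (by positivity) (xB_dep N d hsymm hd) (by
      intro u
      have hsub : Finset.univ.filter (xA N adj emb d r t s ρ u) ⊆
          (Finset.univ : Finset Λ).biUnion fun l => Finset.univ.filter (xA1 N adj t u l) ∪
            Finset.univ.filter (xA2 N adj emb d r t s ρ u l) := by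
        intro f hf
        obtain ⟨l, hl⟩ := (Finset.mem_filter.1 hf).2
        simp only [Finset.mem_biUnion, Finset.mem_univ, true_and, Finset.mem_union,
          Finset.mem_filter]
        exact ⟨l, hl⟩
      have h1 := (Finset.card_le_card hsub).trans Finset.card_biUnion_le
      have h2 : ((Finset.univ.filter (xA N adj emb d r t s ρ u)).card : ℝ) ≤
          ∑ l : Λ, ε * Fintype.card (V → K) := by
        refine (Nat.cast_le.2 h1).trans ?_
        rw [Nat.cast_sum]
        refine Finset.sum_le_sum fun l _ => ?_
        refine (Nat.cast_le.2 (Finset.card_union_le _ _)).trans ?_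
        rw [Nat.cast_add, hε, add_mul]
        refine add_le_add ?_ (xA2_bound N adj emb d r t s ρ hρ hd hd2 σ hσ hr u l)
        rw [div_mul_eq_mul_div, le_div_iff₀ (by positivity)]
        exact xA1_bound N adj d r t ρ hρ hd hr u l
      rw [Finset.sum_const, Finset.card_univ, nsmul_eq_mul] at h2
      have h3 : ((4 * (d + 1) ^ 6 * (Finset.univ.filter (xA N adj emb d r t s ρ u)).card : ℕ) : ℝ) ≤
          Fintype.card (V → K) := by
        push_cast
        calc _ ≤ 4 * ((d : ℝ) + 1) ^ 6 * (Fintype.card Λ * (ε * Fintype.card (V → K))) :=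
              mul_le_mul_of_nonneg_left h2 (by positivity)
          _ = (4 * ((d : ℝ) + 1) ^ 6 * (Fintype.card Λ * ε)) * Fintype.card (V → K) := by ring
          _ ≤ 1 * Fintype.card (V → K) := mul_le_mul_of_nonneg_right hnum (Nat.cast_nonneg _)
          _ = _ := one_mul _
      exact_mod_cast h3)
  refine ⟨f, fun u l => ?_⟩
  have hf1 : ∀ u l, ((N u).filter fun v => adj l (f v)).card ≤ t := by
    intro u l
    by_contra h
    exact hf u ⟨l, Or.inl (not_le.1 h)⟩
  have hf2 : s + 2 * (xZ N adj t ρ f u l).card ≤ (xY N adj emb d r f u l).card := by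
    by_contra h
    exact hf u ⟨l, Or.inr (not_le.1 h)⟩
  have hNU := xNU_card N adj t ρ hρ f u l (hf1 u l)
  have hMs := xM_sub N emb d f u l
  have hsub : xY N adj emb d r f u l ⊆ ((xM N emb d f u l).filter fun v => adj l (f v) ∧
      xgood N emb d f v ∧ ∀ v' ∈ N u, v' ≠ v → f v' ≠ f v) ∪
      ((N u).filter fun v => adj l (f v) ∧ ∃ v' ∈ N u, v' ≠ v ∧ f v' = f v) := by
    intro v hv
    obtain ⟨hvM, hvG⟩ := Finset.mem_filter.1 hv
    have hG' : xG' N adj emb d r f u l v = xG N adj emb d f u l v := by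
      unfold xG'
      rw [if_pos (xG_card N adj emb d r t hsymm hd hd0 hemb hr h8 f hf1 u l v)]
    rw [hG'] at hvG
    obtain ⟨_, hva, hvo⟩ := Finset.mem_filter.1 hvG
    rw [Finset.mem_union]
    by_cases h : ∃ v' ∈ N u, v' ≠ v ∧ f v' = f v
    · exact Or.inr (Finset.mem_filter.2 ⟨hMs hvM, hva, h⟩)
    · push Not at h
      refine Or.inl (Finset.mem_filter.2 ⟨hvM, hva, ?_, h⟩)
      unfold xgood
      refine le_trans (Nat.mul_le_mul_left 4 (Finset.card_le_card ?_)) hvo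
      intro x hx
      obtain ⟨hx1, v', hv', hne, hv2⟩ := Finset.mem_filter.1 hx
      exact Finset.mem_filter.2 ⟨hx1, v', hv', fun hin => h v' hin hne (hemb hv2), hv2⟩
  have := (Finset.card_le_card hsub).trans (Finset.card_union_le _ _)
  omega

end stage1b

section stage2
open Classical

theorem xmaxcut {V : Type} [Fintype V] (G : SimpleGraph V) : ∃ σ : V → Bool, ∀ u,
    (Finset.univ.filter fun v => G.Adj u v).card ≤
      2 * (Finset.univ.filter fun v => G.Adj u v ∧ σ v ≠ σ u).card := by
  let g : (V → Bool) → V → V → ℕ := fun σ x y => if G.Adj x y ∧ σ y ≠ σ x then 1 else 0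
  obtain ⟨σ, hσ⟩ := Finite.exists_max (fun σ : V → Bool => ∑ x, ∑ y, g σ x y)
  refine ⟨σ, fun u => ?_⟩
  have key : ∀ τ : V → Bool, ∑ x, ∑ y, g τ x y =
      ∑ x ∈ Finset.univ.erase u, ∑ y ∈ Finset.univ.erase u, g τ x y + 2 * ∑ y, g τ u y := by
    intro τ
    have hs : ∀ x y, g τ x y = g τ y x := by
      intro x y; simp only [g]; congr 1; rw [G.adj_comm, ne_comm]
    have h0 : g τ u u = 0 := by simp [g]
    rw [← Finset.add_sum_erase Finset.univ _ (Finset.mem_univ u)]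
    have : ∀ x, ∑ y, g τ x y = g τ x u + ∑ y ∈ Finset.univ.erase u, g τ x y := fun x =>
      (Finset.add_sum_erase Finset.univ _ (Finset.mem_univ u)).symm
    rw [Finset.sum_congr rfl (fun x _ => this x), Finset.sum_add_distrib, this u, h0]
    have h3 : ∑ x ∈ Finset.univ.erase u, g τ x u = ∑ x ∈ Finset.univ.erase u, g τ u x :=
      Finset.sum_congr rfl (fun x _ => hs x u)
    rw [h3]; ring
  have h1 := hσ (Function.update σ u (!σ u))
  simp only [key] at h1
  have h2 : ∑ x ∈ Finset.univ.erase u, ∑ y ∈ Finset.univ.erase u,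
      g (Function.update σ u (!σ u)) x y =
      ∑ x ∈ Finset.univ.erase u, ∑ y ∈ Finset.univ.erase u, g σ x y := by
    refine Finset.sum_congr rfl fun x hx => Finset.sum_congr rfl fun y hy => ?_
    simp only [g]
    rw [Function.update_of_ne (Finset.ne_of_mem_erase hx),
      Function.update_of_ne (Finset.ne_of_mem_erase hy)]
  have h3 : ∑ y, g (Function.update σ u (!σ u)) u y + ∑ y, g σ u y =
      ∑ y, (if G.Adj u y then 1 else 0) := by
    rw [← Finset.sum_add_distrib]
    refine Finset.sum_congr rfl fun y _ => ?_
    simp only [g]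
    by_cases h : G.Adj u y
    · have : y ≠ u := h.ne'
      rw [Function.update_of_ne this, Function.update_self]
      cases σ y <;> cases σ u <;> simp [h]
    · simp [h]
  rw [Finset.card_filter, Finset.card_filter]
  change _ ≤ 2 * ∑ y, g σ u y
  omega

theorem xhax {V Λ : Type} [Fintype V] [Fintype Λ] [Nonempty Λ] (N : V → Finset V) (d s m : ℕ)
    (S : V → Λ → Finset V) (hS : ∀ v l, S v l ⊆ N v) (hsymm : ∀ u v, v ∈ N u → u ∈ N v)
    (hd : ∀ u, (N u).card ≤ d) (hd0 : 0 < d) (hs : ∀ v l, s ≤ (S v l).card) (K2 : Finset Λ)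
    (hK : 2 * d ≤ K2.card) (hm : 2 * m ≤ s) (hm0 : 1 ≤ m) (D : Finset V) :
    ∃ (h : V → Λ) (Q : V → Finset V), ∀ v ∈ D, h v ∈ K2 ∧ Q v ⊆ S v (h v) ∧ (Q v).card = m ∧
      ∀ v' ∈ D, v ≠ v' → h v = h v' → Disjoint (Q v) (Q v') := by
  rcases isEmpty_or_nonempty V with hV | hV
  · exact ⟨fun _ => Classical.arbitrary _, fun _ => ∅, fun v => (hV.false v).elim⟩
  let W : Finset (V × Λ × Finset V) := Finset.univ.filter fun a =>
    a.1 ∈ D ∧ a.2.1 ∈ K2 ∧ a.2.2 ⊆ S a.1 a.2.1 ∧ a.2.2.card = m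
  let E : SimpleGraph (V × Λ × Finset V) :=
    { Adj := fun a b => a.1 ≠ b.1 ∧ a.2.1 = b.2.1 ∧ ¬ Disjoint a.2.2 b.2.2
      symm := ⟨fun a b h => ⟨h.1.symm, h.2.1.symm, fun h' => h.2.2 h'.symm⟩⟩
      loopless := ⟨fun a h => h.1 rfl⟩ }
  obtain ⟨t, ht⟩ := xhaxell D W (fun a => a.1) E (by
    intro X hX hXne Z hZ hZc
    by_contra hcon
    push Not at hcon
    let U : Λ → Finset V := fun l => (Z.filter fun z => z.2.1 = l).biUnion fun z => z.2.2
    have h1 : ∀ v ∈ X, ∀ l ∈ K2, m ≤ (S v l ∩ U l).card := by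
      intro v hv l hl
      have h2 : (S v l \ U l).card < m := by
        by_contra h2
        obtain ⟨Q, hQ, hQc⟩ := Finset.exists_subset_card_eq (not_lt.1 h2)
        obtain ⟨z, hz, hza⟩ := hcon (v, l, Q) (Finset.mem_filter.2 ⟨Finset.mem_univ _, hX hv, hl,
          hQ.trans Finset.sdiff_subset, hQc⟩) hv
        obtain ⟨-, hl2, hdis⟩ := hza
        obtain ⟨x, hx1, hx2⟩ := Finset.not_disjoint_iff.1 hdis
        exact (Finset.mem_sdiff.1 (hQ hx2)).2
          (Finset.mem_biUnion.2 ⟨z, Finset.mem_filter.2 ⟨hz, hl2⟩, hx1⟩)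
      have h3 := Finset.card_sdiff_add_card_inter (S v l) (U l)
      have h4 := hs v l
      omega
    have h2 : ∀ l, ∑ v ∈ X, (S v l ∩ U l).card ≤ d * (U l).card := by
      intro l
      calc ∑ v ∈ X, (S v l ∩ U l).card ≤ ∑ v ∈ X, ∑ w ∈ U l, (if v ∈ N w then 1 else 0) := by
            refine Finset.sum_le_sum fun v _ => ?_
            rw [← Finset.card_filter]
            refine Finset.card_le_card fun w hw => ?_
            rw [Finset.mem_inter] at hw
            exact Finset.mem_filter.2 ⟨hw.2, hsymm _ _ (hS _ _ hw.1)⟩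
        _ = ∑ w ∈ U l, ∑ v ∈ X, (if v ∈ N w then 1 else 0) := Finset.sum_comm
        _ ≤ ∑ w ∈ U l, d := by
            refine Finset.sum_le_sum fun w _ => ?_
            rw [← Finset.card_filter]
            refine (Finset.card_le_card fun v hv => ?_).trans (hd w)
            exact (Finset.mem_filter.1 hv).2
        _ = d * (U l).card := by rw [Finset.sum_const, smul_eq_mul, mul_comm]
    have h3 : ∑ l ∈ K2, (U l).card ≤ Z.card * m := by
      calc ∑ l ∈ K2, (U l).card ≤ ∑ l ∈ K2, (Z.filter fun z => z.2.1 = l).card * m := by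
            refine Finset.sum_le_sum fun l _ => ?_
            refine Finset.card_biUnion_le_card_mul _ _ _ fun z hz => ?_
            exact (Finset.mem_filter.1 (hZ (Finset.mem_filter.1 hz).1)).2.2.2.2.le
        _ = (∑ l ∈ K2, (Z.filter fun z => z.2.1 = l).card) * m := by rw [Finset.sum_mul]
        _ = Z.card * m := by
            have hk := Finset.card_eq_sum_card_fiberwise
              (f := fun z : V × Λ × Finset V => z.2.1) (s := Z) (t := K2)
              (fun z hz => (Finset.mem_filter.1 (hZ hz)).2.2.1)
            rw [hk]
    have h4 : X.card * (K2.card * m) ≤ ∑ v ∈ X, ∑ l ∈ K2, (S v l ∩ U l).card := by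
      rw [← smul_eq_mul]
      refine Finset.card_nsmul_le_sum _ _ _ fun v hv => ?_
      rw [← smul_eq_mul]
      exact Finset.card_nsmul_le_sum _ _ _ fun l hl => h1 v hv l hl
    rw [Finset.sum_comm] at h4
    have h5 := h4.trans (Finset.sum_le_sum fun l _ => h2 l)
    rw [← Finset.mul_sum] at h5
    have h6 := h5.trans (Nat.mul_le_mul_left d h3)
    have h7 : X.card * (2 * d * m) ≤ X.card * (K2.card * m) := by gcongr
    have h8 : d * (Z.card * m) ≤ d * (2 * (X.card - 1) * m) := by gcongr
    have h9 : 0 < X.card := hXne.card_pos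
    have h10 : (d * m) * (2 * X.card) ≤ (d * m) * (2 * (X.card - 1)) := by nlinarith
    have h11 := Nat.le_of_mul_le_mul_left h10 (by positivity)
    omega)
  refine ⟨fun v => (t v).2.1, fun v => (t v).2.2, fun v hv => ?_⟩
  obtain ⟨h1, h2, h3⟩ := ht v hv
  obtain ⟨-, -, h4, h5, h6⟩ := Finset.mem_filter.1 h1
  simp only at h2
  rw [h2] at h5
  refine ⟨h4, h5, h6, fun v' hv' hne hl => ?_⟩
  by_contra hd
  refine h3 v' hv' ⟨?_, hl, hd⟩
  have := (ht v' hv').2.1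
  simp only at this
  rw [h2, this]; exact hne

end stage2

section stage3
open Classical

theorem xassemble {V K Λ : Type} [Fintype V] [Fintype K] [Fintype Λ] [Nonempty Λ]
    (N : V → Finset V) (d s m : ℕ)
    (hsymm : ∀ u v, v ∈ N u → u ∈ N v) (hirr : ∀ u, u ∉ N u)
    (hd : ∀ u, (N u).card ≤ d) (hd0 : 0 < d) (R : Λ → Λ → Prop) (emb : K → Λ)
    (hemb : Function.Injective emb)
    (hRs : ∀ a b, R a b → R b a)
    (hR : ∀ a b x y, R a x → R b x → R a y → R b y → a ≠ b → x ≠ y → False)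
    (f : V → K) (hf : ∀ u l, s ≤ ((xM N emb d f u l).filter fun v => R l (emb (f v)) ∧
      xgood N emb d f v ∧ ∀ v' ∈ N u, v' ≠ v → f v' ≠ f v).card)
    (K2 : Finset Λ) (hK2 : ∀ c, emb c ∉ K2) (hK : 2 * d ≤ K2.card) (hm : 2 * m ≤ s)
    (hm0 : 1 ≤ m) :
    ∃ H : SimpleGraph V, (∀ u v, H.Adj u v → v ∈ N u) ∧
      (∀ u v x y, u ≠ v → x ≠ y → H.Adj u x → H.Adj v x → H.Adj u y → H.Adj v y → False) ∧
      ∀ u, m ≤ (Finset.univ.filter fun v => H.Adj u v).card := by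
  have hMN : ∀ u l, xM N emb d f u l ⊆ N u := by
    intro u l; unfold xM; split_ifs
    · exact Finset.sdiff_subset
    · exact Finset.Subset.refl _
  let S : V → Λ → Finset V := fun u l => (xM N emb d f u l).filter fun v => R l (emb (f v)) ∧
      xgood N emb d f v ∧ ∀ v' ∈ N u, v' ≠ v → f v' ≠ f v
  have hSdef : ∀ u l v, v ∈ S u l → v ∈ N u ∧ R l (emb (f v)) ∧
      xgood N emb d f v ∧ ∀ v' ∈ N u, v' ≠ v → f v' ≠ f v := by
    intro u l v hv
    obtain ⟨h1, h2⟩ := Finset.mem_filter.1 hv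
    exact ⟨hMN _ _ h1, h2⟩
  obtain ⟨h, Q, hQ⟩ := xhax N d s m S (fun v l w hw => (hSdef v l w hw).1) hsymm hd hd0 hf K2 hK
    hm hm0 (Finset.univ.filter fun v => ¬ xgood N emb d f v)
  replace hQ : ∀ v, ¬ xgood N emb d f v → h v ∈ K2 ∧ Q v ⊆ S v (h v) ∧ (Q v).card = m ∧
      ∀ v', ¬ xgood N emb d f v' → v ≠ v' → h v = h v' → Disjoint (Q v) (Q v') := by
    intro v hv
    obtain ⟨h1, h2, h3, h4⟩ := hQ v (by simpa using hv)
    exact ⟨h1, h2, h3, fun v' hv' => h4 v' (by simpa using hv')⟩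
  let P : V → V → Prop := fun u v => (xgood N emb d f u ∧ xgood N emb d f v ∧
    R (emb (f u)) (emb (f v)) ∧ (∀ v' ∈ N u, v' ≠ v → f v' ≠ f v) ∧
    (∀ u' ∈ N v, u' ≠ u → f u' ≠ f u))
  let B : V → V → Prop := fun u v => ¬ xgood N emb d f u ∧ v ∈ Q u
  have hPs : ∀ u v, P u v → P v u := fun u v ⟨h1, h2, h3, h4, h5⟩ => ⟨h2, h1, hRs _ _ h3, h5, h4⟩
  have hBB : ∀ u v, (v ∈ N u ∧ (P u v ∨ B u v ∨ B v u)) → (u ∈ N v ∧ (P v u ∨ B v u ∨ B u v)) := by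
    rintro u v ⟨h1, h | h | h⟩
    · exact ⟨hsymm _ _ h1, Or.inl (hPs _ _ h)⟩
    · exact ⟨hsymm _ _ h1, Or.inr (Or.inr h)⟩
    · exact ⟨hsymm _ _ h1, Or.inr (Or.inl h)⟩
  obtain ⟨H, hH⟩ : ∃ H : SimpleGraph V, ∀ u v, H.Adj u v ↔ v ∈ N u ∧ (P u v ∨ B u v ∨ B v u) :=
    ⟨{ Adj := fun u v => v ∈ N u ∧ (P u v ∨ B u v ∨ B v u)
       symm := ⟨hBB⟩
       loopless := ⟨fun u h => hirr u h.1⟩ }, fun u v => Iff.rfl⟩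
  let F : V → Λ := fun v => if xgood N emb d f v then emb (f v) else h v
  have hFg : ∀ v, xgood N emb d f v → F v = emb (f v) := fun v hv => if_pos hv
  have hFb : ∀ v, ¬ xgood N emb d f v → F v = h v := fun v hv => if_neg hv
  have hB : ∀ u v, B u v → R (F u) (F v) ∧ xgood N emb d f v ∧
      ∀ v' ∈ N u, v' ≠ v → f v' ≠ f v := by
    intro u v ⟨h1, h2⟩
    obtain ⟨-, h3, h4, h5⟩ := hSdef _ _ _ ((hQ u h1).2.1 h2)
    rw [hFb u h1, hFg v h4]
    exact ⟨h3, h4, h5⟩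
  have ha : ∀ u v, H.Adj u v → R (F u) (F v) := by
    intro u v h
    rcases ((hH u v).1 h).2 with hp | hb | hb
    · rw [hFg u hp.1, hFg v hp.2.1]; exact hp.2.2.1
    · exact (hB _ _ hb).1
    · exact hRs _ _ (hB _ _ hb).1
  have hgu : ∀ u v, H.Adj u v → xgood N emb d f v → ∀ v' ∈ N u, v' ≠ v → f v' ≠ f v := by
    intro u v h hg
    rcases ((hH u v).1 h).2 with hp | hb | hb
    · exact hp.2.2.2.1
    · exact (hB _ _ hb).2.2
    · exact absurd hg hb.1
  have hbu : ∀ u v, H.Adj u v → ¬ xgood N emb d f v → u ∈ Q v := by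
    intro u v h hg
    rcases ((hH u v).1 h).2 with hp | hb | hb
    · exact absurd hp.2.1 hg
    · exact absurd (hB _ _ hb).2.1 hg
    · exact hb.2
  have hb : ∀ u v w, H.Adj u v → H.Adj u w → v ≠ w → F v ≠ F w := by
    intro u v w hv hw hne heq
    by_cases gv : xgood N emb d f v <;> by_cases gw : xgood N emb d f w
    · rw [hFg v gv, hFg w gw] at heq
      exact hgu u w hw gw v ((hH u v).1 hv).1 hne (hemb heq)
    · rw [hFg v gv, hFb w gw] at heq
      exact hK2 _ (heq ▸ (hQ w gw).1)
    · rw [hFb v gv, hFg w gw] at heq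
      exact hK2 _ (heq ▸ (hQ v gv).1)
    · rw [hFb v gv, hFb w gw] at heq
      exact Finset.disjoint_left.1 ((hQ v gv).2.2.2 w gw hne heq) (hbu u v hv gv) (hbu u w hw gw)
  refine ⟨H, fun u v h => ((hH u v).1 h).1, ?_, ?_⟩
  · intro u v x y huv hxy hux hvx huy hvy
    exact hR (F u) (F v) (F x) (F y) (ha _ _ hux) (ha _ _ hvx) (ha _ _ huy) (ha _ _ hvy)
      (hb x u v hux.symm hvx.symm huv) (hb u x y hux huy hxy)
  · intro u
    by_cases g : xgood N emb d f u
    · refine le_trans (by omega) ((hf u (emb (f u))).trans (Finset.card_le_card fun v hv => ?_))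
      have hv' := hSdef _ _ _ hv
      have hvM := (Finset.mem_filter.1 hv).1
      have g2 : 4 * (xO N emb f u (emb (f u))).card ≤ d := g
      rw [xM, if_pos g2, Finset.mem_sdiff] at hvM
      have hP : P u v := ⟨g, hv'.2.2.1, hv'.2.1, hv'.2.2.2, fun u' hu' hne heq =>
        hvM.2 (Finset.mem_filter.2 ⟨hvM.1, u', hu', hne, by rw [heq]⟩)⟩
      have hA : H.Adj u v := (hH u v).2 ⟨hv'.1, Or.inl hP⟩
      rw [Finset.mem_filter]
      exact ⟨Finset.mem_univ _, hA⟩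
    · rw [← (hQ u g).2.2.1]
      refine Finset.card_le_card fun v hv => ?_
      have hA : H.Adj u v := (hH u v).2 ⟨(hSdef _ _ _ ((hQ u g).2.1 hv)).1, Or.inr (Or.inl ⟨g, hv⟩)⟩
      rw [Finset.mem_filter]
      exact ⟨Finset.mem_univ _, hA⟩

end stage3

section stage4
open Classical

def xR (p : ℕ) (a b : ZMod p × ZMod p) : Prop := a.2 + b.2 = a.1 * b.1

def xemb (p r : ℕ) (c : Fin r × ZMod p) : ZMod p × ZMod p := (((c.1 : ℕ) : ZMod p), c.2)

theorem xemb_val (p r : ℕ) (hr : r ≤ p) (c : Fin r × ZMod p) : (xemb p r c).1.val = c.1 :=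
  ZMod.val_cast_of_lt (lt_of_lt_of_le c.1.2 hr)

theorem xemb_inj (p r : ℕ) (hr : r ≤ p) : Function.Injective (xemb p r) := by
  intro c c' h
  have h1 := xemb_val p r hr c
  rw [h, xemb_val p r hr c'] at h1
  exact Prod.ext (Fin.ext h1.symm) (Prod.ext_iff.1 h).2

theorem xR_symm (p : ℕ) (a b : ZMod p × ZMod p) (h : xR p a b) : xR p b a := by
  unfold xR at *; rw [add_comm, h, mul_comm]

theorem xR_C4 (p : ℕ) [Fact p.Prime] (a b x y : ZMod p × ZMod p) (h1 : xR p a x) (h2 : xR p b x)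
    (h3 : xR p a y) (h4 : xR p b y) (hab : a ≠ b) (hxy : x ≠ y) : False := by
  unfold xR at *
  have h : (a.1 - b.1) * (x.1 - y.1) = 0 := by linear_combination h2 + h3 - h1 - h4
  rcases mul_eq_zero.1 h with h | h
  · apply hab
    have h5 : a.1 = b.1 := sub_eq_zero.1 h
    refine Prod.ext h5 ?_
    rw [h5] at h1
    exact add_right_cancel (h1.trans h2.symm)
  · apply hxy
    have h5 : x.1 = y.1 := sub_eq_zero.1 h
    refine Prod.ext h5 ?_
    rw [h5] at h1
    exact add_left_cancel (h1.trans h3.symm)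

theorem xR_card (p r : ℕ) [Fact p.Prime] (l : ZMod p × ZMod p) :
    ((Finset.univ : Finset (Fin r × ZMod p)).filter fun c => xR p l (xemb p r c)).card = r := by
  have : ((Finset.univ : Finset (Fin r × ZMod p)).filter fun c => xR p l (xemb p r c)) =
      (Finset.univ : Finset (Fin r)).image fun j : Fin r => (j, l.1 * ((j : ℕ) : ZMod p) - l.2) := by
    ext ⟨j, y⟩
    rw [Finset.mem_filter, Finset.mem_image]
    simp only [Finset.mem_univ, true_and, xR, xemb, Prod.mk.injEq]
    constructor
    · intro h
      exact ⟨j, rfl, by rw [← h]; ring⟩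
    · rintro ⟨j', rfl, rfl⟩
      ring
  rw [this, Finset.card_image_of_injective, Finset.card_univ, Fintype.card_fin]
  intro j j' h
  exact (Prod.ext_iff.1 h).1

theorem xK2_card (p r : ℕ) [Fact p.Prime] (hr : r ≤ p) :
    (p - r) * p ≤
      ((Finset.univ : Finset (ZMod p × ZMod p)).filter fun l => r ≤ l.1.val).card := by
  have hval : ∀ j : Fin (p - r), (((r + j : ℕ)) : ZMod p).val = r + j := fun j =>
    ZMod.val_cast_of_lt (by have := j.2; omega)
  have : ((Finset.univ : Finset (Fin (p - r) × ZMod p)).image fun c =>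
      ((((r + c.1 : ℕ)) : ZMod p), c.2)).card = (p - r) * p := by
    rw [Finset.card_image_of_injective, Finset.card_univ, Fintype.card_prod, Fintype.card_fin,
      ZMod.card]
    intro c c' h
    have h1 := (Prod.ext_iff.1 h).1
    have h2 := (Prod.ext_iff.1 h).2
    simp only at h1 h2
    have h3 := hval c.1
    rw [h1, hval c'.1] at h3
    exact Prod.ext (Fin.ext (by omega)) h2
  rw [← this]
  refine Finset.card_le_card fun l hl => ?_
  obtain ⟨c, -, rfl⟩ := Finset.mem_image.1 hl
  rw [Finset.mem_filter]
  exact ⟨Finset.mem_univ _, by rw [hval]; omega⟩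

theorem xmain (p r d t s m : ℕ) (hp : p.Prime) (hr0 : 0 < r) (hr : r ≤ p) (hd0 : 0 < d)
    (h8 : 8 * t ≤ r) (hK : 2 * d ≤ (p - r) * p) (hm : 2 * m ≤ s) (hm0 : 1 ≤ m)
    (hnum : 4 * ((d : ℝ) + 1) ^ 6 * ((p * p : ℝ) * (Real.exp (r * d / (r * p)) / 2 ^ t +
      2 ^ s * Real.exp (- (r * d / (16 * (r * p))) + 3 * t * d / (r * p)))) ≤ 1)
    (V : Type) [Fintype V] (G : SimpleGraph V) (hG : RegularDeg G d) :
    ∃ H : SimpleGraph V, H ≤ G ∧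
            (∀ j : ℕ, 3 ≤ j → j ≤ 5 → ¬ ContainsCopy (cycleGraph j) H) ∧
            ∀ v : V, m ≤ deg H v := by
  have : Fact p.Prime := ⟨hp⟩
  have : NeZero r := ⟨hr0.ne'⟩
  have hdeg : ∀ (G : SimpleGraph V) u, deg G u = (Finset.univ.filter fun v => G.Adj u v).card := by
    intro G u
    unfold deg
    rw [← Set.ncard_coe_finset]
    congr 1
    ext v; simp
  obtain ⟨σ, hσ⟩ := xmaxcut G
  let N : V → Finset V := fun u => Finset.univ.filter fun v => G.Adj u v ∧ σ v ≠ σ u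
  have hN : ∀ u v, v ∈ N u ↔ G.Adj u v ∧ σ v ≠ σ u := by intro u v; simp [N]
  have hsymm : ∀ u v, v ∈ N u → u ∈ N v := by
    intro u v h
    rw [hN] at *
    exact ⟨h.1.symm, h.2.symm⟩
  have hGd : ∀ u, (Finset.univ.filter fun v => G.Adj u v).card = d := fun u => by
    rw [← hdeg]; exact hG u
  have hd : ∀ u, (N u).card ≤ d := by
    intro u
    rw [← hGd u]
    refine Finset.card_le_card fun v hv => ?_
    rw [Finset.mem_filter]
    exact ⟨Finset.mem_univ _, ((hN u v).1 hv).1⟩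
  have hd2 : ∀ u, d ≤ 2 * (N u).card := by
    intro u
    have := hσ u
    rwa [hGd u] at this
  obtain ⟨f, hf⟩ := xstage1 N (fun l c => xR p l (xemb p r c)) (xemb p r) d r t s hsymm hd hd0 hd2 σ
    (fun u v hv => ((hN u v).1 hv).2) (xemb_inj p r hr) (xR_card p r) h8 (by
      simp only [Fintype.card_prod, ZMod.card, Fintype.card_fin, Nat.cast_mul]
      exact hnum)
  obtain ⟨H, hH1, hH2, hH3⟩ := xassemble N d s m hsymm (fun u hu => ((hN u u).1 hu).2 rfl) hd hd0
    (xR p) (xemb p r) (xemb_inj p r hr) (xR_symm p) (xR_C4 p) f hf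
    (Finset.univ.filter fun l => r ≤ l.1.val) (by
      intro c hc
      rw [Finset.mem_filter, xemb_val p r hr] at hc
      have := c.1.2
      omega) (hK.trans (xK2_card p r hr)) hm hm0
  have hbip : ∀ u v, H.Adj u v → σ v ≠ σ u := fun u v h => ((hN u v).1 (hH1 u v h)).2
  refine ⟨H, fun u v h => ((hN u v).1 (hH1 u v h)).1, ?_, fun v => by rw [hdeg]; exact hH3 v⟩
  rintro j h3 h5 ⟨g, hg⟩
  interval_cases j
  · have a1 := hbip _ _ (g.map_adj (show (cycleGraph 3).Adj 0 1 by decide))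
    have a2 := hbip _ _ (g.map_adj (show (cycleGraph 3).Adj 1 2 by decide))
    have a3 := hbip _ _ (g.map_adj (show (cycleGraph 3).Adj 2 0 by decide))
    revert a1 a2 a3
    cases σ (g 0) <;> cases σ (g 1) <;> cases σ (g 2) <;> simp
  · exact hH2 (g 0) (g 2) (g 1) (g 3) (fun h => absurd (hg h) (by decide))
      (fun h => absurd (hg h) (by decide))
      (g.map_adj (show (cycleGraph 4).Adj 0 1 by decide))
      (g.map_adj (show (cycleGraph 4).Adj 2 1 by decide))
      (g.map_adj (show (cycleGraph 4).Adj 0 3 by decide))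
      (g.map_adj (show (cycleGraph 4).Adj 2 3 by decide))
  · have a1 := hbip _ _ (g.map_adj (show (cycleGraph 5).Adj 0 1 by decide))
    have a2 := hbip _ _ (g.map_adj (show (cycleGraph 5).Adj 1 2 by decide))
    have a3 := hbip _ _ (g.map_adj (show (cycleGraph 5).Adj 2 3 by decide))
    have a4 := hbip _ _ (g.map_adj (show (cycleGraph 5).Adj 3 4 by decide))
    have a5 := hbip _ _ (g.map_adj (show (cycleGraph 5).Adj 4 0 by decide))
    revert a1 a2 a3 a4 a5
    cases σ (g 0) <;> cases σ (g 1) <;> cases σ (g 2) <;> cases σ (g 3) <;> cases σ (g 4) <;> simp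

end stage4

set_option maxHeartbeats 2000000 in
theorem xnum : ∃ d₀ : ℕ, ∀ d : ℕ, d₀ ≤ d → ∃ p r t s m : ℕ, p.Prime ∧ 0 < r ∧ r ≤ p ∧ 0 < d ∧
    8 * t ≤ r ∧ 2 * d ≤ (p - r) * p ∧ 2 * m ≤ s ∧ 1 ≤ m ∧
    4 * ((d : ℝ) + 1) ^ 6 * ((p * p : ℝ) * (Real.exp (r * d / (r * p)) / 2 ^ t +
      2 ^ s * Real.exp (- (r * d / (16 * (r * p))) + 3 * t * d / (r * p)))) ≤ 1 ∧
    1 / 100000 * Real.sqrt (d : ℝ) ≤ (m : ℝ) := by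
  have htend := Real.tendsto_pow_mul_exp_neg_atTop_nhds_zero 14
  obtain ⟨Y, hY⟩ := Filter.eventually_atTop.1
    (htend.eventually_le_const (show (0 : ℝ) < 1 / (8 * 64 * 40000 * 8000 ^ 14) by positivity))
  refine ⟨⌈(8000 * |Y| + 1000000) ^ 2⌉₊, fun d hd => ?_⟩
  have hd1 : (8000 * |Y| + 1000000) ^ 2 ≤ (d : ℝ) := Nat.ceil_le.1 hd
  set x : ℝ := Real.sqrt d with hx
  have hx0 : 0 ≤ x := Real.sqrt_nonneg _
  have hxx : x ^ 2 = d := Real.sq_sqrt (Nat.cast_nonneg d)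
  have hxY : 8000 * |Y| + 1000000 ≤ x := Real.le_sqrt_of_sq_le hd1
  have hYabs : 0 ≤ |Y| := abs_nonneg Y
  have hxbig : 1000000 ≤ x := by linarith
  have hYx : Y ≤ x / 8000 := by have := le_abs_self Y; linarith
  have hmain := hY _ hYx
  set k := Nat.sqrt d with hk
  have hk1 : k * k ≤ d := Nat.sqrt_le d
  have hk2 : d < (k + 1) * (k + 1) := Nat.lt_succ_sqrt d
  have hkx : (k : ℝ) ≤ x := by
    apply Real.le_sqrt_of_sq_le
    rw [sq]; exact_mod_cast hk1
  have hd2 : (d : ℝ) < ((k : ℝ) + 1) * ((k : ℝ) + 1) := by exact_mod_cast hk2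
  have hxk : x < k + 1 := by
    by_contra h
    push Not at h
    have : ((k : ℝ) + 1) * (k + 1) ≤ x * x := by gcongr
    nlinarith
  have hkbig : (999999 : ℝ) ≤ k := by linarith
  have hkn : 999999 ≤ k := by exact_mod_cast hkbig
  obtain ⟨p, hp, hp1, hp2⟩ := Nat.exists_prime_lt_and_le_two_mul (100 * k) (by omega)
  have hd3 : d ≤ 2 * (k * k) := by nlinarith
  have hp1' : 100 * (k : ℝ) < p := by exact_mod_cast hp1
  have hp2' : (p : ℝ) ≤ 200 * k := by
    have : ((p : ℕ) : ℝ) ≤ ((2 * (100 * k) : ℕ) : ℝ) := by exact_mod_cast hp2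
    push_cast at this; linarith
  have hp0 : (0 : ℝ) < p := by linarith
  have hd3' : (d : ℝ) ≤ 2 * (k * k) := by exact_mod_cast hd3
  have hpd : 5000 * (d : ℝ) ≤ p * p := by nlinarith
  obtain ⟨r, hr⟩ : ∃ r, r = p / 2 := ⟨_, rfl⟩
  have hr1 : 2 * r ≤ p := by omega
  have hr2 : p ≤ 3 * r := by omega
  have hr2' : (p : ℝ) ≤ 3 * r := by exact_mod_cast hr2
  have hr0 : (0 : ℝ) < r := by linarith
  have hdpos : (0 : ℝ) < d := by rw [← hxx]; positivity
  set T : ℝ := d / p with hT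
  have hTp : T * p = d := by rw [hT]; field_simp
  have hTx : x ≤ 200 * T := by
    rw [hT, ← mul_div_assoc, le_div_iff₀ hp0, ← hxx]
    nlinarith
  have hT1 : 1 ≤ T := by linarith
  have h5T : 5000 * T ≤ p := by
    rw [hT, ← mul_div_assoc, div_le_iff₀ hp0]; exact hpd
  set t := ⌈4 * T⌉₊ with ht
  have ht1 : 4 * T ≤ t := Nat.le_ceil _
  have ht2 : (t : ℝ) ≤ 5 * T := by
    have := Nat.ceil_lt_add_one (show 0 ≤ 4 * T by linarith)
    linarith
  set s := ⌊T / 40⌋₊ with hs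
  have hs1 : (s : ℝ) ≤ T / 40 := Nat.floor_le (by linarith)
  have hs2 : T / 40 < s + 1 := Nat.lt_floor_add_one _
  have hm2 : s ≤ 2 * (s / 2) + 1 := by omega
  have hm2' : (s : ℝ) ≤ 2 * ((s / 2 : ℕ) : ℝ) + 1 := by exact_mod_cast hm2
  have hmx : 1 / 100000 * x ≤ ((s / 2 : ℕ) : ℝ) := by linarith
  have hm1 : 1 ≤ s / 2 := by
    have : (1 : ℝ) ≤ ((s / 2 : ℕ) : ℝ) := by linarith
    exact_mod_cast this
  refine ⟨p, r, t, s, s / 2, hp, by exact_mod_cast hr0, by omega, by exact_mod_cast hdpos, ?_, ?_,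
    by omega, hm1, ?_, hmx⟩
  · have : 8 * (t : ℝ) ≤ r := by linarith
    exact_mod_cast this
  · have h1 : p ≤ 2 * (p - r) := by omega
    have h2 : 5000 * d ≤ p * p := by exact_mod_cast hpd
    nlinarith
  · have e1 : (r : ℝ) * d / (r * p) = T := by rw [hT]; field_simp
    have e2 : (r : ℝ) * d / (16 * (r * p)) = T / 16 := by rw [hT]; field_simp
    have e3 : 3 * (t : ℝ) * d / (r * p) ≤ 9 / 1000 * T := by
      rw [div_le_iff₀ (by positivity), ← hTp]
      have h2 : 3 * (t : ℝ) ≤ 9 / 1000 * r := by linarith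
      have h3 : 3 * (t : ℝ) * (T * p) ≤ 9 / 1000 * r * (T * p) := by gcongr
      linarith
    rw [e1, e2]
    have l1 := Real.log_two_gt_d9
    have l2 := Real.log_two_lt_d9
    have p1 : ∀ n : ℕ, (2 : ℝ) ^ n = Real.exp (n * Real.log 2) := by
      intro n
      rw [mul_comm, Real.exp_mul, Real.exp_log (by norm_num), Real.rpow_natCast]
    have b1 : Real.exp T / 2 ^ t ≤ Real.exp (-(x / 8000)) := by
      rw [p1, ← Real.exp_sub, Real.exp_le_exp]
      have h9 : (4 * T) * (69 / 100) ≤ t * Real.log 2 := by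
        apply mul_le_mul ht1 (by linarith) (by norm_num) (by positivity)
      have hTx' : T / 40 ≤ 4 * T * (69 / 100) - T := by linarith
      have hTx2 : x / 8000 ≤ T / 40 := by linarith
      linarith
    have b2 : 2 ^ s * Real.exp (-(T / 16) + 3 * t * d / (r * p)) ≤ Real.exp (-(x / 8000)) := by
      rw [p1, ← Real.exp_add, Real.exp_le_exp]
      have : (s : ℝ) * Real.log 2 ≤ (T / 40) * (7 / 10) := by
        apply mul_le_mul hs1 (by linarith) (by linarith) (by linarith)
      have hTx2 : x / 8000 ≤ T / 40 := by linarith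
      linarith
    have hE : 0 < Real.exp (-(x / 8000)) := Real.exp_pos _
    have hpx : (p : ℝ) ≤ 200 * x := by linarith
    have hdx : (d : ℝ) + 1 ≤ 2 * x ^ 2 := by nlinarith
    calc 4 * ((d : ℝ) + 1) ^ 6 * ((p * p : ℝ) * (Real.exp T / 2 ^ t +
          2 ^ s * Real.exp (-(T / 16) + 3 * t * d / (r * p))))
        ≤ 4 * (2 * x ^ 2) ^ 6 * ((200 * x) * (200 * x) * (Real.exp (-(x / 8000)) +
          Real.exp (-(x / 8000)))) := by gcongr
      _ = (8 * 64 * 40000 * 8000 ^ 14) * ((x / 8000) ^ 14 * Real.exp (-(x / 8000))) := by ring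
      _ ≤ (8 * 64 * 40000 * 8000 ^ 14) * (1 / (8 * 64 * 40000 * 8000 ^ 14)) := by gcongr
      _ = 1 := by norm_num

theorem statement10 :
    ∃ (c : ℝ) (d₀ : ℕ), 0 < c ∧
      ∀ d : ℕ, d₀ ≤ d →
        ∀ (V : Type) [Fintype V] (G : SimpleGraph V), RegularDeg G d →
          ∃ H : SimpleGraph V, H ≤ G ∧
            (∀ j : ℕ, 3 ≤ j → j ≤ 5 → ¬ ContainsCopy (cycleGraph j) H) ∧
            ∀ v : V, c * Real.sqrt (d : ℝ) ≤ (deg H v : ℝ) := by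
  obtain ⟨d₀, h⟩ := xnum
  refine ⟨1 / 100000, d₀, by norm_num, fun d hd V _ G hG => ?_⟩
  obtain ⟨p, r, t, s, m, hp, hr0, hr, hd0, h8, hK, hm, hm0, hnum, hmx⟩ := h d hd
  obtain ⟨H, h1, h2, h3⟩ := xmain p r d t s m hp hr0 hr hd0 h8 hK hm hm0 hnum V G hG
  exact ⟨H, h1, h2, fun v => hmx.trans (by exact_mod_cast h3 v)⟩
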